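/- Let m, r be positive integers with r ≥ 2, and let M = ⌈(2^{3r-2}(r-1)^{2r-1}/r!)^{1/(r-1)} · m · (m(r-1)+r)^{1/(r-1)}⌉. If q is a squarefree positive integer with φ(q) ≥ M, then there are at least (⌈m/(r-1)⌉! / (M(M-1)···(M-⌈m/(r-1)⌉+1))) · φ(q)(φ(q)-1)···(φ(q)-⌈m/(r-1)⌉+1) many m-tuples a ∈ ((ℤ/qℤ)^×)^m such that π(x;q,a) → ∞ as x → ∞. -/

import Mathlib

open Filter

/-- `π(x; q, a)`: the number of indices `n` with `p_n ≤ x` such that the `m` consecutive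
primes `p_n, p_{n+1}, …, p_{n+m-1}` satisfy `p_{n+i} ≡ a_i (mod q)` for all `i`. -/
noncomputable def consecCount (q m : ℕ) (a : Fin m → (ZMod q)ˣ) (x : ℝ) : ℕ :=
  Set.ncard {n : ℕ | (Nat.nth Nat.Prime n : ℝ) ≤ x ∧
    ∀ i : Fin m, ((Nat.nth Nat.Prime (n + (i : ℕ)) : ℕ) : ZMod q) = (a i : ZMod q)}

/-- The quantity `M = ⌈(2^(3r-2) (r-1)^(2r-1) / r!)^(1/(r-1)) · m · (m(r-1)+r)^(1/(r-1))⌉`. -/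
noncomputable def Mval (m r : ℕ) : ℕ :=
  ⌈((2 : ℝ) ^ (3 * r - 2) * ((r : ℝ) - 1) ^ (2 * r - 1) / (r.factorial : ℝ)) ^
        ((1 : ℝ) / ((r : ℝ) - 1)) *
      (m : ℝ) * ((m : ℝ) * ((r : ℝ) - 1) + (r : ℝ)) ^ ((1 : ℝ) / ((r : ℝ) - 1))⌉₊


namespace SV
open Finset

lemma periodic_mod {f : ℕ → ℝ} {p : ℕ} (hf : Function.Periodic f p) (n : ℕ) : f (n % p) = f n :=
  hf.map_mod_nat n

lemma sum_two {f g : ℕ → ℝ} {p d : ℕ} (hp : 0 < p) (hd : 0 < d) (hpd : Nat.Coprime p d)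
    (hf : Function.Periodic f p) (hg : Function.Periodic g d) :
    ∑ n ∈ range (p * d), f n * g n = (∑ a ∈ range p, f a) * ∑ b ∈ range d, g b := by
  rw [Finset.sum_mul_sum, ← Finset.sum_product']
  have hinj : Set.InjOn (fun n => (n % p, n % d)) (range (p * d) : Set ℕ) := by
    intro a ha b hb hab
    simp only [coe_range, Set.mem_Iio] at ha hb
    simp only [Prod.mk.injEq] at hab
    have : a ≡ b [MOD p * d] := (Nat.modEq_and_modEq_iff_modEq_mul hpd).1 ⟨hab.1, hab.2⟩
    exact Nat.ModEq.eq_of_lt_of_lt this ha hb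
  have himg : (range (p * d)).image (fun n => (n % p, n % d)) = range p ×ˢ range d := by
    apply Finset.eq_of_subset_of_card_le
    · intro x hx
      simp only [mem_image, mem_range] at hx
      obtain ⟨n, _, rfl⟩ := hx
      simp [Nat.mod_lt _ hp, Nat.mod_lt _ hd]
    · rw [Finset.card_image_of_injOn hinj]; simp
  rw [← himg, Finset.sum_image hinj]
  refine Finset.sum_congr rfl fun n _ => ?_
  simp only [periodic_mod hf, periodic_mod hg]

lemma periodic_prod (s : Finset ℕ) (u : ℕ → ℕ → ℝ)
    (hu : ∀ p ∈ s, Function.Periodic (u p) p) :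
    Function.Periodic (fun n => ∏ p ∈ s, u p n) (∏ p ∈ s, p) := by
  intro n
  refine Finset.prod_congr rfl fun p hp => ?_
  obtain ⟨c, hc⟩ := Finset.dvd_prod_of_mem (fun p => p) hp
  rw [hc, mul_comm]
  exact (hu p hp).nat_mul c n

lemma sum_crt (s : Finset ℕ) (hs : ∀ p ∈ s, p.Prime) (u : ℕ → ℕ → ℝ)
    (hu : ∀ p ∈ s, Function.Periodic (u p) p) :
    ∑ n ∈ range (∏ p ∈ s, p), ∏ p ∈ s, u p n = ∏ p ∈ s, ∑ r ∈ range p, u p r := by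
  induction s using Finset.induction_on with
  | empty => simp
  | insert p s hps ih =>
    have h1 : ∀ q ∈ s, q.Prime := fun q hq => hs q (mem_insert_of_mem hq)
    have h2 : ∀ q ∈ s, Function.Periodic (u q) q := fun q hq => hu q (mem_insert_of_mem hq)
    have hp := hs p (mem_insert_self _ _)
    rw [prod_insert hps, prod_insert hps, ← ih h1 h2]
    simp only [prod_insert hps]
    refine sum_two hp.pos (Finset.prod_pos fun q hq => (h1 q hq).pos) ?_
      (hu p (mem_insert_self _ _)) (periodic_prod s u h2)
    refine Nat.Coprime.prod_right fun q hq => ?_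
    exact (Nat.coprime_primes hp (h1 q hq)).2 (by rintro rfl; exact hps hq)

lemma sum_period {f : ℕ → ℝ} {D : ℕ} (hf : Function.Periodic f D) (k r : ℕ) :
    ∑ j ∈ range (D * k + r), f j = k * ∑ j ∈ range D, f j + ∑ j ∈ range r, f j := by
  induction k with
  | zero => simp
  | succ k ih =>
    have : D * (k + 1) + r = D + (D * k + r) := by ring
    rw [this, Finset.sum_range_add]
    have h2 : ∀ j, f (D + j) = f j := fun j => by rw [add_comm]; exact hf j
    simp only [h2, ih]
    push_cast; ring

lemma sum_incomplete {f : ℕ → ℝ} {D : ℕ} (hD : 0 < D) (hf : Function.Periodic f D) (J : ℕ) :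
    ∑ j ∈ range J, f j ≤ J * ((∑ j ∈ range D, f j) / D) + 2 * ∑ j ∈ range D, |f j| := by
  have h := sum_period hf (J / D) (J % D)
  rw [Nat.div_add_mod] at h
  rw [h]
  have hD' : (0:ℝ) < D := by exact_mod_cast hD
  have hJ : (J : ℝ) = D * (J / D : ℕ) + (J % D : ℕ) := by exact_mod_cast (Nat.div_add_mod J D).symm
  have hr : ((J % D : ℕ) : ℝ) ≤ D := by exact_mod_cast (Nat.mod_lt J hD).le
  have hr0 : (0:ℝ) ≤ ((J % D : ℕ) : ℝ) := by positivity
  have h1 : ∑ j ∈ range (J % D), f j ≤ ∑ j ∈ range D, |f j| :=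
    (Finset.sum_le_sum fun j _ => le_abs_self _).trans
      (Finset.sum_le_sum_of_subset_of_nonneg (by
        intro x hx; simp only [mem_range] at *; exact hx.trans (Nat.mod_lt J hD))
        fun _ _ _ => abs_nonneg _)
  set S := ∑ j ∈ range D, f j
  set T := ∑ j ∈ range D, |f j|
  have hST : |S| ≤ T := Finset.abs_sum_le_sum_abs _ _
  have h3 : -((J % D : ℕ) : ℝ) * (S / D) ≤ T := by
    rw [← mul_div_assoc, div_le_iff₀ hD']
    have := neg_abs_le S
    have := abs_nonneg S
    nlinarith
  have h4 : (J : ℝ) * (S / D) = (J / D : ℕ) * S + (J % D : ℕ) * (S / D) := by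
    rw [hJ]; field_simp
  rw [h4]
  linarith

/-- the Selberg weight factor -/
noncomputable def ph (m : ℕ) (b : ℕ → ℕ → ℝ) (p j : ℕ) : ℝ := 1 - (p / m : ℝ) * b p j

noncomputable def hh (m : ℕ) (p : ℕ) : ℝ := m / ((p : ℝ) - m)

section
variable {m : ℕ} {b : ℕ → ℕ → ℝ} {p : ℕ}

lemma ph_sum (hm : 0 < m) (hc : ∑ j ∈ range p, b p j = m) : ∑ j ∈ range p, ph m b p j = 0 := by
  have : (m:ℝ) ≠ 0 := by positivity
  simp only [ph, sum_sub_distrib, ← mul_sum, hc]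
  simp; field_simp; simp

lemma ph_sq_sum (hm : 0 < m) (hb : ∀ j, b p j = 0 ∨ b p j = 1) (hc : ∑ j ∈ range p, b p j = m) :
    ∑ j ∈ range p, ph m b p j ^ 2 = p * (p - m) / m := by
  have hm' : (m:ℝ) ≠ 0 := by positivity
  have : ∀ j, ph m b p j ^ 2 = 1 + (((p:ℝ)/m)^2 - 2 * (p / m)) * b p j := by
    intro j
    unfold ph
    rcases hb j with h | h <;> rw [h] <;> ring
  simp only [this, sum_add_distrib, ← mul_sum, hc]
  simp; field_simp; ring

lemma ph_abs_sum (hm : 0 < m) (hpm : 2 * m ≤ p) (hb : ∀ j, b p j = 0 ∨ b p j = 1)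
    (hc : ∑ j ∈ range p, b p j = m) :
    ∑ j ∈ range p, |ph m b p j| = 2 * (p - m) := by
  have hm' : (m:ℝ) ≠ 0 := by positivity
  have hm0 : (0:ℝ) < m := by positivity
  have hpm' : (2 * m : ℝ) ≤ p := by exact_mod_cast hpm
  have hge : (1:ℝ) ≤ p / m := by rw [le_div_iff₀ hm0]; linarith
  have : ∀ j, |ph m b p j| = 1 + ((p:ℝ)/m - 2) * b p j := by
    intro j
    unfold ph
    rcases hb j with h | h <;> rw [h]
    · simp
    · rw [abs_of_nonpos (by linarith)]; ring
  simp only [this, sum_add_distrib, ← mul_sum, hc]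
  simp; field_simp; ring
end

theorem selberg (m : ℕ) (hm : 0 < m) (P : Finset ℕ) (hP : ∀ p ∈ P, p.Prime)
    (hPm : ∀ p ∈ P, 2 * m ≤ p) (b : ℕ → ℕ → ℝ) (hb : ∀ p j, b p j = 0 ∨ b p j = 1)
    (hper : ∀ p ∈ P, Function.Periodic (b p) p)
    (hc : ∀ p ∈ P, ∑ j ∈ range p, b p j = m)
    (D : Finset (Finset ℕ)) (hD : ∀ t ∈ D, t ⊆ P) (h0 : ∅ ∈ D) (J : ℕ)
    (S : Finset ℕ) (hSJ : S ⊆ range J) (hS : ∀ j ∈ S, ∀ p ∈ P, b p j = 0) :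
    (S.card : ℝ) ≤ J / (∑ t ∈ D, ∏ p ∈ t, hh m p)
      + 2 * ∑ t ∈ D, ∑ t' ∈ D, (2 * m : ℝ) ^ (t.card + t'.card) := by
  classical
  set L := ∑ t ∈ D, ∏ p ∈ t, hh m p with hL
  have hm0 : (0:ℝ) < m := by positivity
  have hpm : ∀ p ∈ P, (2 * m : ℝ) ≤ p := fun p hp => by exact_mod_cast hPm p hp
  have hhpos : ∀ p ∈ P, 0 < hh m p := fun p hp => by
    have := hpm p hp
    exact div_pos hm0 (by linarith)
  have hHpos : ∀ t ∈ D, 0 < ∏ p ∈ t, hh m p := fun t ht =>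
    Finset.prod_pos fun p hp => hhpos p (hD t ht hp)
  have hL1 : 1 ≤ L := by
    have := Finset.single_le_sum (f := fun t => ∏ p ∈ t, hh m p) (fun t ht => (hHpos t ht).le) h0
    simpa using this
  have hL0 : 0 < L := by linarith
  let f : ℕ → ℝ := fun j => ∑ t ∈ D, (∏ p ∈ t, hh m p) * ∏ p ∈ t, ph m b p j
  have hfS : ∀ j ∈ S, f j = L := by
    intro j hj
    refine Finset.sum_congr rfl fun t ht => ?_
    rw [Finset.prod_eq_one (s := t) (f := fun p => ph m b p j), mul_one]
    intro p hp
    simp [ph, hS j hj p (hD t ht hp)]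
  have hsum1 : S.card * L ^ 2 ≤ ∑ j ∈ range J, f j ^ 2 := by
    calc S.card * L ^ 2 = ∑ j ∈ S, f j ^ 2 := by
          rw [Finset.sum_congr rfl fun j hj => by rw [hfS j hj]]; simp
      _ ≤ _ := Finset.sum_le_sum_of_subset_of_nonneg hSJ fun _ _ _ => sq_nonneg _
  -- the key pair estimate
  have key : ∀ t ∈ D, ∀ t' ∈ D, (∏ p ∈ t, hh m p) * (∏ p ∈ t', hh m p) *
      ∑ j ∈ range J, (∏ p ∈ t, ph m b p j) * (∏ p ∈ t', ph m b p j) ≤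
      (if t = t' then J * ∏ p ∈ t, hh m p else 0) + 2 * (2 * m : ℝ) ^ (t.card + t'.card) := by
    intro t ht t' ht'
    let u : ℕ → ℕ → ℝ := fun p j =>
      (if p ∈ t then ph m b p j else 1) * (if p ∈ t' then ph m b p j else 1)
    let c : ℕ → ℝ := fun p => (if p ∈ t then hh m p else 1) * (if p ∈ t' then hh m p else 1)
    have hsub : t ∪ t' ⊆ P := union_subset (hD t ht) (hD t' ht')
    have e1 : ∀ (w : ℕ → ℝ), (∏ p ∈ t, w p) * (∏ p ∈ t', w p) =
        ∏ p ∈ t ∪ t', ((if p ∈ t then w p else 1) * (if p ∈ t' then w p else 1)) := by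
      intro w
      rw [Finset.prod_mul_distrib, Finset.prod_ite_mem, Finset.prod_ite_mem]
      congr 1
      · congr 1; ext x; simp
      · congr 1; ext x; simp
    have hper_ph : ∀ p ∈ P, Function.Periodic (ph m b p) p := by
      intro p hp j
      simp [ph, hper p hp j]
    have hperu : ∀ p ∈ t ∪ t', Function.Periodic (u p) p := by
      intro p hp j
      simp only [u, hper_ph p (hsub hp) j]
    have hprime : ∀ p ∈ t ∪ t', p.Prime := fun p hp => hP p (hsub hp)
    have hDpos : 0 < ∏ p ∈ t ∪ t', p := Finset.prod_pos fun p hp => (hprime p hp).pos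
    have hcpos : ∀ p ∈ t ∪ t', 0 < c p := by
      intro p hp
      have := hhpos p (hsub hp)
      simp only [c]; split_ifs <;> simp [this]
    simp only [e1]
    change (∏ p ∈ t ∪ t', c p) * ∑ j ∈ range J, ∏ p ∈ t ∪ t', u p j ≤ _
    have hinc := sum_incomplete hDpos (periodic_prod _ u hperu) J
    have habs : ∑ j ∈ range (∏ p ∈ t ∪ t', p), |∏ p ∈ t ∪ t', u p j| =
        ∏ p ∈ t ∪ t', ∑ r ∈ range p, |u p r| := by
      simp only [Finset.abs_prod]
      exact sum_crt _ hprime (fun p j => |u p j|) (fun p hp j => by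
        simp only [hperu p hp j])
    rw [habs, sum_crt _ hprime u hperu] at hinc
    have hC : 0 < ∏ p ∈ t ∪ t', c p := Finset.prod_pos hcpos
    have hA : (∏ p ∈ t ∪ t', c p) * ∏ p ∈ t ∪ t', ∑ r ∈ range p, |u p r| ≤
        (2 * m : ℝ) ^ (t.card + t'.card) := by
      rw [← Finset.prod_mul_distrib]
      have h1 : ∏ p ∈ t ∪ t', (c p * ∑ r ∈ range p, |u p r|) ≤ ∏ p ∈ t ∪ t', (2 * m : ℝ) := by
        refine Finset.prod_le_prod (fun p hp => mul_nonneg (hcpos p hp).le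
          (Finset.sum_nonneg fun _ _ => abs_nonneg _)) fun p hp => ?_
        have hp2 := hpm p (hsub hp)
        have hpmpos : (0:ℝ) < p - m := by linarith
        have hne : (p:ℝ) - m ≠ 0 := hpmpos.ne'
        have A1 := ph_abs_sum hm (hPm p (hsub hp)) (hb p) (hc p (hsub hp))
        have A2 := ph_sq_sum hm (hb p) (hc p (hsub hp))
        by_cases h1 : p ∈ t <;> by_cases h2 : p ∈ t'
        · simp only [u, c, h1, h2, if_true]
          have : ∀ r, |ph m b p r * ph m b p r| = ph m b p r ^ 2 := fun r => by
            rw [abs_mul_self, sq]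
          simp only [this, A2, hh]
          have : (m:ℝ) / (p - m) * (m / (p - m)) * (p * (p - m) / m) = m * p / (p - m) := by
            field_simp
          rw [this, div_le_iff₀ hpmpos]
          nlinarith
        · simp only [u, c, h1, h2, if_true, if_false, mul_one, A1, hh]
          rw [div_mul_eq_mul_div, div_le_iff₀ hpmpos]; linarith
        · simp only [u, c, h1, h2, if_true, if_false, one_mul, A1, hh]
          rw [div_mul_eq_mul_div, div_le_iff₀ hpmpos]; linarith
        · exact absurd hp (by simp [h1, h2])
      refine h1.trans ?_
      rw [Finset.prod_const]
      refine pow_le_pow_right₀ ?_ (Finset.card_union_le _ _)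
      have : (1:ℝ) ≤ m := by exact_mod_cast hm
      linarith
    have hB : (∏ p ∈ t ∪ t', c p) * (J * ((∏ p ∈ t ∪ t', ∑ r ∈ range p, u p r) /
        (∏ p ∈ t ∪ t', p : ℕ))) = if t = t' then J * ∏ p ∈ t, hh m p else 0 := by
      split_ifs with htt
      · subst htt
        have : (∏ p ∈ t ∪ t, c p) * ((J:ℝ) * ((∏ p ∈ t ∪ t, ∑ r ∈ range p, u p r) /
          (∏ p ∈ t ∪ t, p : ℕ))) = J * ∏ p ∈ t, (c p * ((∑ r ∈ range p, u p r) / p)) := by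
          simp only [union_self, prod_mul_distrib, prod_div_distrib]
          push_cast; ring
        rw [this]
        congr 1
        refine Finset.prod_congr rfl fun p hp => ?_
        have hpP := hD t ht hp
        have hp2 := hpm p hpP
        have hpmpos : (0:ℝ) < p - m := by linarith
        have hp0 : (0:ℝ) < p := by linarith
        have hne : (p:ℝ) - m ≠ 0 := hpmpos.ne'
        have A2 := ph_sq_sum hm (hb p) (hc p hpP)
        simp only [u, c, hp, if_true, ← sq, A2, hh]
        field_simp
      · have : ∃ p ∈ t ∪ t', ∑ r ∈ range p, u p r = 0 := by
          have : ∃ p, ¬ (p ∈ t ↔ p ∈ t') := by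
            by_contra hcon; push Not at hcon
            exact htt (Finset.ext hcon)
          obtain ⟨p, hp⟩ := this
          by_cases h1 : p ∈ t
          · have h2 : p ∉ t' := fun h => hp ⟨fun _ => h, fun _ => h1⟩
            refine ⟨p, by simp [h1], ?_⟩
            simp only [u, h1, h2, if_true, if_false, mul_one]
            exact ph_sum hm (hc p (hD t ht h1))
          · have h2 : p ∈ t' := by by_contra h; exact hp ⟨fun h' => absurd h' h1, fun h' => absurd h' h⟩
            refine ⟨p, by simp [h2], ?_⟩
            simp only [u, h1, h2, if_true, if_false, one_mul]
            exact ph_sum hm (hc p (hD t' ht' h2))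
        obtain ⟨p, hp, hp0⟩ := this
        rw [Finset.prod_eq_zero (f := fun p => ∑ r ∈ range p, u p r) hp hp0]; simp
    calc _ ≤ (∏ p ∈ t ∪ t', c p) * _ := mul_le_mul_of_nonneg_left hinc hC.le
      _ = (∏ p ∈ t ∪ t', c p) * (J * ((∏ p ∈ t ∪ t', ∑ r ∈ range p, u p r) /
        (∏ p ∈ t ∪ t', p : ℕ))) + 2 * ((∏ p ∈ t ∪ t', c p) *
          ∏ p ∈ t ∪ t', ∑ r ∈ range p, |u p r|) := by ring
      _ ≤ _ := by rw [hB]; linarith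
  have hsum2 : ∑ j ∈ range J, f j ^ 2 ≤ J * L +
      2 * ∑ t ∈ D, ∑ t' ∈ D, (2 * m : ℝ) ^ (t.card + t'.card) := by
    have e : ∑ j ∈ range J, f j ^ 2 = ∑ t ∈ D, ∑ t' ∈ D,
        (∏ p ∈ t, hh m p) * (∏ p ∈ t', hh m p) *
      ∑ j ∈ range J, (∏ p ∈ t, ph m b p j) * (∏ p ∈ t', ph m b p j) := by
      simp only [f, sq, Finset.sum_mul_sum]
      simp only [Finset.mul_sum]
      rw [Finset.sum_comm]
      refine Finset.sum_congr rfl fun t _ => ?_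
      rw [Finset.sum_comm]
      refine Finset.sum_congr rfl fun t' _ => ?_
      refine Finset.sum_congr rfl fun j _ => ?_
      ring
    rw [e]
    calc _ ≤ ∑ t ∈ D, ∑ t' ∈ D, ((if t = t' then J * ∏ p ∈ t, hh m p else 0) +
          2 * (2 * m : ℝ) ^ (t.card + t'.card)) :=
          Finset.sum_le_sum fun t ht => Finset.sum_le_sum fun t' ht' => key t ht t' ht'
      _ = _ := by
          simp only [sum_add_distrib, ← mul_sum]
          congr 1
          rw [hL, mul_sum]
          refine Finset.sum_congr rfl fun t ht => ?_
          simp [ht]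
  have hE : 0 ≤ ∑ t ∈ D, ∑ t' ∈ D, (2 * m : ℝ) ^ (t.card + t'.card) := by positivity
  set E := ∑ t ∈ D, ∑ t' ∈ D, (2 * m : ℝ) ^ (t.card + t'.card)
  have h5 : (S.card : ℝ) * L ^ 2 ≤ J * L + 2 * E := hsum1.trans hsum2
  have h6 : (S.card : ℝ) ≤ (J * L + 2 * E) / L ^ 2 := by
    rw [le_div_iff₀ (by positivity)]; exact h5
  refine h6.trans ?_
  rw [add_div]
  have : (J:ℝ) * L / L ^ 2 = J / L := by field_simp
  rw [this]
  gcongr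
  exact div_le_self (by positivity) (one_le_pow₀ hL1)

end SV


namespace SV
open Finset
open ArithmeticFunction (cardFactors)

lemma sum_coprime_ge (Y : ℕ) (s : Finset ℕ) (hs : ∀ p ∈ s, p.Prime) :
    (∏ p ∈ s, (1 - 1 / (p:ℝ))) * ∑ n ∈ Icc 1 Y, 1 / (n:ℝ) ≤
      ∑ n ∈ (Icc 1 Y).filter (fun n => ∀ p ∈ s, ¬ p ∣ n), 1 / (n:ℝ) := by
  induction s using Finset.induction_on with
  | empty => simp
  | insert p s hps ih =>
    have h1 : ∀ q ∈ s, q.Prime := fun q hq => hs q (mem_insert_of_mem hq)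
    have hp := hs p (mem_insert_self _ _)
    have ih := ih h1
    rw [prod_insert hps]
    set A := (Icc 1 Y).filter (fun n => ∀ p ∈ s, ¬ p ∣ n) with hA
    set T := ∑ n ∈ A, 1 / (n:ℝ) with hT
    have hp2 : (2:ℝ) ≤ p := by exact_mod_cast hp.two_le
    have hsplit : T = ∑ n ∈ A.filter (fun n => ¬ p ∣ n), 1 / (n:ℝ) +
        ∑ n ∈ A.filter (fun n => p ∣ n), 1 / (n:ℝ) := by
      rw [add_comm]; exact (Finset.sum_filter_add_sum_filter_not A _ _).symm
    have e1 : A.filter (fun n => ¬ p ∣ n) =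
        (Icc 1 Y).filter (fun n => ∀ q ∈ insert p s, ¬ q ∣ n) := by
      ext n; simp only [hA, mem_filter, mem_insert, forall_eq_or_imp]; tauto
    have e2 : ∑ n ∈ A.filter (fun n => p ∣ n), 1 / (n:ℝ) ≤ 1 / p * T := by
      have hsub : A.filter (fun n => p ∣ n) ⊆ A.image (fun n => p * n) := by
        intro n hn
        simp only [hA, mem_filter, mem_Icc, mem_image] at hn ⊢
        obtain ⟨⟨⟨h1n, hnY⟩, hq⟩, c, rfl⟩ := hn
        refine ⟨c, ⟨⟨?_, ?_⟩, ?_⟩, rfl⟩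
        · exact Nat.pos_of_ne_zero (by rintro rfl; simp at h1n)
        · exact (Nat.le_mul_of_pos_left c hp.pos).trans hnY
        · exact fun q hq' hd => hq q hq' (hd.mul_left p)
      calc _ ≤ ∑ n ∈ A.image (fun n => p * n), 1 / (n:ℝ) :=
            Finset.sum_le_sum_of_subset_of_nonneg hsub fun _ _ _ => by positivity
        _ = ∑ n ∈ A, 1 / ((p * n : ℕ):ℝ) := by
            rw [Finset.sum_image]
            intro a _ b _ hab
            exact Nat.eq_of_mul_eq_mul_left hp.pos hab
        _ = _ := by
            rw [hT, mul_sum]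
            refine sum_congr rfl fun n _ => ?_
            push_cast; rw [one_div_mul_one_div]
    rw [← e1]
    have h3 : (1 - 1 / (p:ℝ)) * T ≤ ∑ n ∈ A.filter (fun n => ¬ p ∣ n), 1 / (n:ℝ) := by
      linarith
    refine le_trans ?_ h3
    rw [mul_assoc]
    refine mul_le_mul_of_nonneg_left ih ?_
    rw [sub_nonneg, div_le_one (by linarith)]; linarith

lemma sum_divisors_le (j n : ℕ) (hn : n ≠ 0) :
    ∑ d ∈ n.divisors, j ^ cardFactors d ≤ (j + 1) ^ cardFactors n := by
  induction n using Nat.recOnMul with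
  | zero => exact absurd rfl hn
  | one => simp
  | prime p hp =>
    rw [hp.sum_divisors, ArithmeticFunction.cardFactors_apply_prime hp]; simp [add_comm]
  | mul a b iha ihb =>
    obtain ⟨ha, hb⟩ := mul_ne_zero_iff.1 hn
    rw [ArithmeticFunction.cardFactors_mul ha hb, pow_add]
    refine le_trans ?_ (Nat.mul_le_mul (iha ha) (ihb hb))
    rw [Finset.sum_mul_sum, ← Finset.sum_product']
    have : (a * b).divisors ⊆ (a.divisors ×ˢ b.divisors).image (fun x => x.1 * x.2) := by
      rw [Nat.divisors_mul]
      intro x hx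
      obtain ⟨y, hy, z, hz, rfl⟩ := Finset.mem_mul.1 hx
      exact mem_image.2 ⟨(y, z), mem_product.2 ⟨hy, hz⟩, rfl⟩
    refine (Finset.sum_le_sum_of_subset this).trans ?_
    refine (Finset.sum_image_le_of_nonneg (fun _ _ => Nat.zero_le _)).trans (le_of_eq ?_)
    refine sum_congr rfl fun x hx => ?_
    rw [mem_product] at hx
    rw [ArithmeticFunction.cardFactors_mul (Nat.pos_of_mem_divisors hx.1).ne'
      (Nat.pos_of_mem_divisors hx.2).ne', pow_add]

lemma pow_cardFactors_le (c v : ℕ) (hv : v ≠ 0) (h : ∀ p, p.Prime → p ∣ v → c ≤ p) :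
    c ^ cardFactors v ≤ v := by
  induction v using Nat.recOnMul with
  | zero => exact absurd rfl hv
  | one => simp
  | prime p hp => rw [ArithmeticFunction.cardFactors_apply_prime hp]; simpa using h p hp dvd_rfl
  | mul a b iha ihb =>
    obtain ⟨ha, hb⟩ := mul_ne_zero_iff.1 hv
    rw [ArithmeticFunction.cardFactors_mul ha hb, pow_add]
    exact Nat.mul_le_mul (iha ha fun p hp hd => h p hp (hd.mul_right b))
      (ihb hb fun p hp hd => h p hp (hd.mul_left a))

noncomputable def co (B Z : ℕ) : Finset ℕ := (Icc 1 Z).filter (fun n => Nat.Coprime n B)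

noncomputable def SS (j B Z : ℕ) : ℝ := ∑ n ∈ co B Z, (j:ℝ) ^ cardFactors n / n

lemma mem_co {B Z n : ℕ} : n ∈ co B Z ↔ (1 ≤ n ∧ n ≤ Z) ∧ Nat.Coprime n B := by
  simp [co]

lemma SS_nonneg (j B Z : ℕ) : 0 ≤ SS j B Z := by unfold SS; positivity

lemma SS_one (B Y : ℕ) (hB : B ≠ 0) :
    (∏ p ∈ B.primeFactors, (1 - 1 / (p:ℝ))) * Real.log Y ≤ SS 1 B Y := by
  have h := sum_coprime_ge Y B.primeFactors (fun p hp => Nat.prime_of_mem_primeFactors hp)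
  have e : (Icc 1 Y).filter (fun n => ∀ p ∈ B.primeFactors, ¬ p ∣ n) = co B Y := by
    ext n
    simp only [co, mem_filter, and_congr_right_iff]
    intro hn
    constructor
    · intro h
      refine Nat.Coprime.symm (Nat.coprime_of_dvd fun p hp hpB hpn => ?_)
      exact h p (Nat.mem_primeFactors.2 ⟨hp, hpB, hB⟩) hpn
    · intro h p hp hpn
      have hp' := Nat.mem_primeFactors.1 hp
      exact hp'.1.one_lt.ne' (Nat.eq_one_of_dvd_coprimes h hpn hp'.2.1)
  rw [e] at h
  have e2 : SS 1 B Y = ∑ n ∈ co B Y, 1 / (n:ℝ) := by simp [SS]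
  rw [e2]
  refine le_trans ?_ h
  refine mul_le_mul_of_nonneg_left ?_ ?_
  · have h1 := log_add_one_le_harmonic Y
    have h2 : Real.log Y ≤ Real.log ((Y:ℝ) + 1) := by
      rcases Nat.eq_zero_or_pos Y with rfl | hY
      · simp
      · apply Real.log_le_log (by exact_mod_cast hY); linarith
    rw [harmonic_eq_sum_Icc] at h1
    push_cast at h1
    simp only [one_div]
    linarith
  · refine prod_nonneg fun p hp => ?_
    have : (1:ℝ) ≤ p := by exact_mod_cast (Nat.prime_of_mem_primeFactors hp).one_lt.le
    rw [sub_nonneg, div_le_one (by linarith)]; exact this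

lemma SS_succ (j B Z Y : ℕ) : SS j B Z * SS 1 B Y ≤ SS (j + 1) B (Z * Y) := by
  have h1 : ∑ n ∈ co B (Z * Y), ∑ d ∈ n.divisors, (j:ℝ) ^ cardFactors d / n ≤ SS (j+1) B (Z*Y) := by
    unfold SS
    refine sum_le_sum fun n hn => ?_
    rw [← sum_div]
    gcongr
    have := sum_divisors_le j n (by have := (mem_co.1 hn).1.1; omega)
    exact_mod_cast this
  refine le_trans ?_ h1
  unfold SS
  rw [sum_mul_sum, ← sum_product', sum_sigma']
  have hinj : Set.InjOn (fun x : ℕ × ℕ => (⟨x.1 * x.2, x.1⟩ : (_ : ℕ) × ℕ))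
      (co B Z ×ˢ co B Y : Finset (ℕ × ℕ)) := by
    intro x hx y hy hxy
    simp only [coe_product, Set.mem_prod, mem_coe, mem_co] at hx hy
    simp only [Sigma.mk.injEq, heq_eq_eq] at hxy
    obtain ⟨hh1, hh2⟩ := hxy
    ext
    · exact hh2
    · rw [hh2] at hh1
      exact Nat.eq_of_mul_eq_mul_left (by omega) hh1
  have hsub : (co B Z ×ˢ co B Y).image (fun x : ℕ × ℕ => (⟨x.1 * x.2, x.1⟩ : (_ : ℕ) × ℕ)) ⊆
      (co B (Z * Y)).sigma (fun n => n.divisors) := by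
    intro x hx
    obtain ⟨⟨a, b⟩, hab, rfl⟩ := mem_image.1 hx
    simp only [mem_product, mem_co, mem_sigma, Nat.mem_divisors] at hab ⊢
    obtain ⟨⟨⟨ha1, ha2⟩, ha3⟩, ⟨hb1, hb2⟩, hb3⟩ := hab
    exact ⟨⟨⟨Nat.mul_pos ha1 hb1, Nat.mul_le_mul ha2 hb2⟩, Nat.Coprime.mul_left ha3 hb3⟩,
      dvd_mul_right _ _, (Nat.mul_pos ha1 hb1).ne'⟩
  refine le_trans (le_of_eq ?_) (Finset.sum_le_sum_of_subset_of_nonneg hsub fun _ _ _ => by positivity)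
  rw [sum_image hinj]
  refine sum_congr rfl fun x _ => ?_
  simp only [Nat.cast_one, one_pow, Nat.cast_mul]
  rw [div_mul_div_comm, mul_one]

lemma SS_pow (B Y m : ℕ) (hm : 0 < m) : SS 1 B Y ^ m ≤ SS m B (Y ^ m) := by
  induction m, hm using Nat.le_induction with
  | base => simp
  | succ k hk ih =>
    rw [pow_succ, pow_succ]
    exact (mul_le_mul_of_nonneg_right ih (SS_nonneg _ _ _)).trans (SS_succ _ _ _ _)

lemma SS_sq (m B R : ℕ) : SS m B R ≤
    (∑ l ∈ (co B R).filter Squarefree, (m:ℝ) ^ cardFactors l / l) *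
      ∑ v ∈ co B R, (m:ℝ) ^ (2 * cardFactors v) / (v:ℝ) ^ 2 := by
  choose a b hab hsq using Nat.sq_mul_squarefree
  rw [sum_mul_sum, ← sum_product']
  have hinj : Set.InjOn (fun n => (a n, b n)) (co B R : Set ℕ) := by
    intro x _ y _ hxy
    simp only [Prod.mk.injEq] at hxy
    rw [← hab x, ← hab y, hxy.1, hxy.2]
  have hsub : (co B R).image (fun n => (a n, b n)) ⊆ (co B R).filter Squarefree ×ˢ co B R := by
    intro x hx
    obtain ⟨n, hn, rfl⟩ := mem_image.1 hx
    obtain ⟨⟨h1, h2⟩, h3⟩ := mem_co.1 hn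
    have hn0 : n ≠ 0 := by omega
    have ha0 : a n ≠ 0 := fun h => hn0 (by rw [← hab n, h]; simp)
    have hb0 : b n ≠ 0 := fun h => hn0 (by rw [← hab n, h]; simp)
    have had : a n ∣ n := ⟨b n ^ 2, by rw [mul_comm]; exact (hab n).symm⟩
    have hbd : b n ∣ n := ⟨b n * a n, by rw [← mul_assoc, ← sq]; exact (hab n).symm⟩
    simp only [mem_product, mem_filter, mem_co]
    exact ⟨⟨⟨⟨Nat.pos_of_ne_zero ha0, (Nat.le_of_dvd h1 had).trans h2⟩,
      Nat.Coprime.coprime_dvd_left had h3⟩, hsq n⟩,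
      ⟨Nat.pos_of_ne_zero hb0, (Nat.le_of_dvd h1 hbd).trans h2⟩, Nat.Coprime.coprime_dvd_left hbd h3⟩
  refine le_trans (le_of_eq ?_) (Finset.sum_le_sum_of_subset_of_nonneg hsub fun _ _ _ => by positivity)
  rw [sum_image hinj, SS]
  refine sum_congr rfl fun n hn => ?_
  obtain ⟨⟨h1, h2⟩, h3⟩ := mem_co.1 hn
  have hn0 : n ≠ 0 := by omega
  have ha0 : a n ≠ 0 := fun h => hn0 (by rw [← hab n, h]; simp)
  have hb0 : b n ≠ 0 := fun h => hn0 (by rw [← hab n, h]; simp)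
  dsimp only
  rw [div_mul_div_comm]
  conv_lhs => rw [← hab n]
  rw [ArithmeticFunction.cardFactors_mul (pow_ne_zero 2 hb0) ha0,
    ArithmeticFunction.cardFactors_pow, pow_add]
  push_cast
  rw [mul_comm ((m:ℝ) ^ (2 * _)), mul_comm ((b n : ℝ)^2)]

lemma sum_insert_le' (a : ℕ) (s : Finset ℕ) (f : ℕ → ℝ) (hf : 0 ≤ f a) :
    ∑ x ∈ insert a s, f x ≤ f a + ∑ x ∈ s, f x := by
  by_cases h : a ∈ s
  · rw [insert_eq_of_mem h]; linarith
  · rw [sum_insert h]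

lemma V_le (m B w R : ℕ) (τ : ℝ) (hw : ∀ p, p.Prime → p ≤ w → p ∣ B) (hmw : m ^ 4 ≤ w)
    (hτ : ∀ R : ℕ, ∑ v ∈ Ioc w R, 1 / ((v:ℝ) * √v) ≤ τ) :
    ∑ v ∈ co B R, (m:ℝ) ^ (2 * cardFactors v) / (v:ℝ) ^ 2 ≤ 1 + τ := by
  have hbig : ∀ v, v.Coprime B → ∀ p, p.Prime → p ∣ v → w < p := by
    intro v hv p hp hpv
    by_contra hcon
    exact hp.one_lt.ne' (Nat.eq_one_of_dvd_coprimes hv hpv (hw p hp (by omega)))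
  have hsub : co B R ⊆ insert 1 ((co B R).filter (fun v => w < v)) := by
    intro v hv
    rw [mem_insert, mem_filter]
    by_cases h1 : v = 1
    · exact Or.inl h1
    · right
      obtain ⟨⟨h2, h3⟩, h4⟩ := mem_co.1 hv
      obtain ⟨p, hp, hpv⟩ := Nat.exists_prime_and_dvd h1
      exact ⟨hv, (hbig v h4 p hp hpv).trans_le (Nat.le_of_dvd h2 hpv)⟩
  refine (Finset.sum_le_sum_of_subset_of_nonneg hsub fun _ _ _ => by positivity).trans ?_
  refine (sum_insert_le' _ _ _ ?_).trans ?_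
  · positivity
  simp only [ArithmeticFunction.cardFactors_one, mul_zero, pow_zero, Nat.cast_one, one_pow, div_one]
  gcongr
  refine le_trans ?_ (hτ R)
  calc _ ≤ ∑ v ∈ (co B R).filter (fun v => w < v), 1 / ((v:ℝ) * √v) := by
        refine sum_le_sum fun v hv => ?_
        rw [mem_filter, mem_co] at hv
        obtain ⟨⟨⟨h1, h2⟩, h3⟩, h4⟩ := hv
        have h5 := pow_cardFactors_le (m ^ 4) v (by omega)
          (fun p hp hpv => hmw.trans (hbig v h3 p hp hpv).le)
        have hv0 : (0:ℝ) < v := by exact_mod_cast h1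
        have h6 : ((m:ℝ) ^ (2 * cardFactors v)) ^ 2 ≤ v := by
          have : ((m ^ 4) ^ cardFactors v : ℝ) ≤ v := by exact_mod_cast h5
          refine le_trans (le_of_eq ?_) this
          rw [← pow_mul, ← pow_mul]; ring_nf
        have h7 : (m:ℝ) ^ (2 * cardFactors v) ≤ √v := Real.le_sqrt_of_sq_le h6
        rw [div_le_div_iff₀ (by positivity) (by positivity)]
        have h8 : √(v:ℝ) * √v = v := Real.mul_self_sqrt hv0.le
        calc (m:ℝ) ^ (2 * cardFactors v) * (v * √v) ≤ √v * (v * √v) := by gcongr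
          _ = 1 * (v:ℝ)^2 := by rw [mul_left_comm, h8]; ring
    _ ≤ _ := by
        refine Finset.sum_le_sum_of_subset_of_nonneg ?_ fun _ _ _ => by positivity
        intro v hv
        rw [mem_filter, mem_co] at hv
        rw [mem_Ioc]; exact ⟨hv.2, hv.1.1.2⟩

theorem L_bound (m B w Y : ℕ) (hm : 0 < m) (hB : B ≠ 0) (τ : ℝ)
    (hw : ∀ p, p.Prime → p ≤ w → p ∣ B) (hmw : m ^ 4 ≤ w) (hY : 0 < Y)
    (hτ : ∀ R : ℕ, ∑ v ∈ Ioc w R, 1 / ((v:ℝ) * √v) ≤ τ) :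
    ((∏ p ∈ B.primeFactors, (1 - 1 / (p:ℝ))) * Real.log Y) ^ m ≤
    (∑ l ∈ (co B (Y ^ m)).filter Squarefree, (m:ℝ) ^ cardFactors l / l) * (1 + τ) := by
  have h1 := SS_one B Y hB
  have h0 : 0 ≤ (∏ p ∈ B.primeFactors, (1 - 1 / (p:ℝ))) * Real.log Y := by
    refine mul_nonneg (prod_nonneg fun p hp => ?_) (Real.log_nonneg (by exact_mod_cast hY))
    have : (1:ℝ) ≤ p := by exact_mod_cast (Nat.prime_of_mem_primeFactors hp).one_lt.le
    rw [sub_nonneg, div_le_one (by linarith)]; exact this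
  refine (pow_le_pow_left₀ h0 h1 m).trans ((SS_pow B Y m hm).trans ((SS_sq _ _ _).trans ?_))
  refine mul_le_mul_of_nonneg_left (V_le m B w _ τ hw hmw hτ) ?_
  positivity

end SV


namespace SV
open Finset
open ArithmeticFunction (cardFactors)

lemma root_count (m Q A p : ℕ) (hp : p.Prime) (hQ : ¬ p ∣ Q) (h : Fin m → ℕ)
    (hne : ∀ i j, i ≠ j → ¬ (p : ℤ) ∣ (h i : ℤ) - h j) :
    ((range p).filter (fun j => ∃ i, p ∣ A + Q * j + h i)).card = m := by
  have : Fact p.Prime := ⟨hp⟩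
  have hQ0 : (Q : ZMod p) ≠ 0 := by rwa [Ne, ZMod.natCast_eq_zero_iff]
  let r : Fin m → ℕ := fun i => (-((A : ZMod p) + h i) * (Q : ZMod p)⁻¹).val
  have hr : ∀ i, ((r i : ℕ) : ZMod p) = -((A : ZMod p) + h i) * (Q : ZMod p)⁻¹ := by
    intro i; simp only [r]; rw [ZMod.natCast_val, ZMod.cast_id', id]
  have e : (range p).filter (fun j => ∃ i, p ∣ A + Q * j + h i) = univ.image r := by
    ext j
    simp only [mem_filter, mem_range, mem_image, mem_univ, true_and]
    constructor
    · rintro ⟨hj, i, hi⟩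
      refine ⟨i, ?_⟩
      rw [← ZMod.natCast_eq_zero_iff] at hi
      push_cast at hi
      have : (j : ZMod p) = -((A : ZMod p) + h i) * (Q : ZMod p)⁻¹ := by
        rw [eq_mul_inv_iff_mul_eq₀ hQ0]; linear_combination hi
      simp only [r]
      rw [← this, ZMod.val_natCast, Nat.mod_eq_of_lt hj]
    · rintro ⟨i, rfl⟩
      refine ⟨ZMod.val_lt _, i, ?_⟩
      rw [← ZMod.natCast_eq_zero_iff]
      push_cast
      rw [hr]
      field_simp
      ring
  rw [e, card_image_of_injective, card_univ, Fintype.card_fin]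
  intro i j hij
  by_contra hcon
  apply hne i j hcon
  have h1 := hr i
  rw [hij, hr j] at h1
  have h2 := mul_right_cancel₀ (inv_ne_zero hQ0) h1
  rw [← ZMod.intCast_zmod_eq_zero_iff_dvd]
  push_cast
  linear_combination h2

theorem tuple_bound (m Q B w Y A J : ℕ) (hm : 0 < m) (hB : B ≠ 0) (τ : ℝ) (hY : 1 < Y)
    (hw : ∀ p, p.Prime → p ≤ w → p ∣ B) (hmw : (2 * m) ^ 4 ≤ w)
    (hτ : ∀ R : ℕ, ∑ v ∈ Ioc w R, 1 / ((v:ℝ) * √v) ≤ τ) (h : Fin m → ℕ)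
    (hQB : Q ∣ B) (hhB : ∀ p : ℕ, p.Prime → ∀ i j, i ≠ j → (p : ℤ) ∣ (h i : ℤ) - h j → p ∣ B)
    (S : Finset ℕ) (hSJ : S ⊆ range J)
    (hS : ∀ j ∈ S, ∀ i, (A + Q * j + h i).Prime ∧ Y ^ m < A + Q * j + h i) :
    (S.card : ℝ) ≤ J * (1 + τ) / ((∏ p ∈ B.primeFactors, (1 - 1 / (p:ℝ))) * Real.log Y) ^ m +
      2 * (((Y ^ m : ℕ) : ℝ) ^ 2 * √((Y ^ m : ℕ) : ℝ)) := by
  classical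
  set R := Y ^ m with hR
  have hR0 : 0 < R := by positivity
  let P := (range (R + 1)).filter (fun p => p.Prime ∧ ¬ p ∣ B)
  have hPw : ∀ p ∈ P, w < p := by
    intro p hp
    simp only [P, mem_filter, mem_range] at hp
    by_contra hcon
    exact hp.2.2 (hw p hp.2.1 (by omega))
  have hm2w : 2 * m ≤ w := le_trans (by
    calc 2 * m = (2 * m) ^ 1 := (pow_one _).symm
      _ ≤ (2 * m) ^ 4 := Nat.pow_le_pow_right (by omega) (by norm_num)) hmw
  let D := ((co B R).filter Squarefree).image Nat.primeFactors
  let b : ℕ → ℕ → ℝ := fun p j => if ∃ i, p ∣ A + Q * j + h i then 1 else 0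
  have hinj : Set.InjOn Nat.primeFactors ((co B R).filter Squarefree : Set ℕ) := by
    intro x hx y hy hxy
    simp only [coe_filter, Set.mem_ofPred_eq] at hx hy
    rw [← Nat.prod_primeFactors_of_squarefree hx.2, ← Nat.prod_primeFactors_of_squarefree hy.2, hxy]
  have hDP : ∀ t ∈ D, t ⊆ P := by
    intro t ht p hp
    obtain ⟨l, hl, rfl⟩ := mem_image.1 ht
    rw [mem_filter, mem_co] at hl
    have hp' := Nat.mem_primeFactors.1 hp
    simp only [P, mem_filter, mem_range]
    refine ⟨?_, hp'.1, fun hpB => hp'.1.one_lt.ne' (Nat.eq_one_of_dvd_coprimes hl.1.2 hp'.2.1 hpB)⟩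
    have := Nat.le_of_dvd hl.1.1.1 hp'.2.1
    omega
  have hcardF : ∀ l, Squarefree l → cardFactors l = l.primeFactors.card := by
    intro l hl
    rw [← (ArithmeticFunction.cardDistinctFactors_eq_cardFactors_iff_squarefree hl.ne_zero).2 hl,
      ArithmeticFunction.cardDistinctFactors_apply, Nat.primeFactors, List.card_toFinset]
  have key := selberg m hm P (fun p hp => by simp only [P, mem_filter] at hp; exact hp.2.1)
    (fun p hp => hm2w.trans (hPw p hp).le) b
    (fun p j => by by_cases hh : ∃ i, p ∣ A + Q * j + h i <;> simp [b, hh])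
    (fun p hp j => by
      have : ∀ i, (p ∣ A + Q * (j + p) + h i ↔ p ∣ A + Q * j + h i) := fun i => by
        have : A + Q * (j + p) + h i = (A + Q * j + h i) + p * Q := by ring
        rw [this]; exact (Nat.dvd_add_iff_left (dvd_mul_right p Q)).symm
      simp only [b, this])
    (fun p hp => by
      simp only [P, mem_filter, mem_range] at hp
      have := root_count m Q A p hp.2.1 (fun hd => hp.2.2 (hd.trans hQB)) h
        (fun i j hij hd => hp.2.2 (hhB p hp.2.1 i j hij hd))
      simp only [b, Finset.sum_boole]
      exact_mod_cast this)
    D hDP (mem_image.2 ⟨1, by simp [mem_co]; omega, by simp⟩) J S hSJ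
    (fun j hj p hp => by
      simp only [b]
      rw [if_neg]
      rintro ⟨i, hi⟩
      simp only [P, mem_filter, mem_range] at hp
      have := (Nat.prime_dvd_prime_iff_eq hp.2.1 (hS j hj i).1).1 hi
      have := (hS j hj i).2
      omega)
  refine key.trans (add_le_add ?_ ?_)
  · have hL := L_bound m B w Y hm hB τ hw
      ((Nat.pow_le_pow_left (by omega) 4).trans hmw) (by omega) hτ
    have hle : ∑ l ∈ (co B R).filter Squarefree, (m:ℝ) ^ cardFactors l / l ≤
        ∑ t ∈ D, ∏ p ∈ t, hh m p := by
      simp only [D]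
      rw [sum_image hinj]
      refine sum_le_sum fun l hl => ?_
      have hl' := hl
      rw [mem_filter, mem_co] at hl
      rw [hcardF l hl.2]
      have hlp : (l : ℝ) = ∏ p ∈ l.primeFactors, (p : ℝ) := by
        rw [← Nat.cast_prod, Nat.prod_primeFactors_of_squarefree hl.2]
      rw [hlp, ← prod_const, ← prod_div_distrib]
      refine prod_le_prod (fun p _ => by positivity) fun p hp => ?_
      have hpP := hDP _ (mem_image.2 ⟨l, hl', rfl⟩) hp
      have h2 : (2 * m : ℝ) ≤ p := by exact_mod_cast hm2w.trans (hPw p hpP).le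
      have hm0 : (0:ℝ) < m := by positivity
      exact div_le_div_of_nonneg_left hm0.le (by linarith) (by linarith)
    have hτ0 : 0 ≤ τ := le_trans (sum_nonneg fun _ _ => by positivity) (hτ 0)
    have hpos : 0 < ((∏ p ∈ B.primeFactors, (1 - 1 / (p:ℝ))) * Real.log Y) ^ m := by
      refine pow_pos (mul_pos (prod_pos fun p hp => ?_) (Real.log_pos (by exact_mod_cast hY))) m
      have : (1:ℝ) < p := by exact_mod_cast (Nat.prime_of_mem_primeFactors hp).one_lt
      rw [sub_pos, div_lt_one (by linarith)]; exact this
    have h3 := hL.trans (mul_le_mul_of_nonneg_right hle (by linarith : 0 ≤ 1 + τ))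
    set LL := ∑ t ∈ D, ∏ p ∈ t, hh m p
    have hLL : 0 < LL := by
      by_contra hcon
      have : LL * (1 + τ) ≤ 0 := mul_nonpos_of_nonpos_of_nonneg (not_lt.1 hcon) (by linarith)
      linarith
    rw [div_le_div_iff₀ hLL hpos]
    have hJ : (0:ℝ) ≤ J := by positivity
    nlinarith
  · gcongr
    have hcard : (D.card : ℝ) ≤ R := by
      have : D.card ≤ R := by
        refine card_image_le.trans ?_
        refine (card_le_card (filter_subset _ _)).trans ?_
        refine (card_le_card (filter_subset _ _)).trans (by simp)
      exact_mod_cast this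
    have hb1 : ∀ t ∈ D, (((2 * m : ℝ)) ^ t.card) ^ 4 ≤ R := by
      intro t ht
      obtain ⟨l, hl, rfl⟩ := mem_image.1 ht
      have hl' := hl
      rw [mem_filter, mem_co] at hl
      rw [← hcardF l hl.2]
      have h1 := pow_cardFactors_le ((2 * m) ^ 4) l (by omega) (fun p hp hpl => by
        refine hmw.trans (hPw p (hDP _ ht ?_)).le
        exact Nat.mem_primeFactors.2 ⟨hp, hpl, by omega⟩)
      have h2 := h1.trans hl.1.1.2
      have h3 : (((2 * m : ℝ)) ^ 4) ^ cardFactors l ≤ R := by exact_mod_cast h2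
      refine le_trans (le_of_eq ?_) h3
      rw [← pow_mul, ← pow_mul, mul_comm 4]
    have hb2 : ∀ t ∈ D, ∀ t' ∈ D, (2 * m : ℝ) ^ (t.card + t'.card) ≤ √(R:ℝ) := by
      intro t ht t' ht'
      have h1 := hb1 t ht
      have h2 := hb1 t' ht'
      refine Real.le_sqrt_of_sq_le ?_
      have hRp : (0:ℝ) ≤ R := by positivity
      refine le_of_sq_le_sq ?_ hRp
      rw [pow_add]
      calc _ = (((2 * m : ℝ)) ^ t.card) ^ 4 * (((2 * m : ℝ)) ^ t'.card) ^ 4 := by ring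
        _ ≤ R * R := by gcongr
        _ = _ := by ring
    calc _ ≤ ∑ t ∈ D, ∑ t' ∈ D, √(R:ℝ) :=
          sum_le_sum fun t ht => sum_le_sum fun t' ht' => hb2 t ht t' ht'
      _ = (D.card:ℝ) ^ 2 * √(R:ℝ) := by simp; ring
      _ ≤ _ := by gcongr

end SV


namespace SV
open Finset

noncomputable def cc (p : ℕ) : ℝ := (1 - 1 / (p:ℝ))⁻¹

lemma cc_one_le {p : ℕ} (hp : p.Prime) : 1 ≤ cc p := by
  have h : (1:ℝ) < p := by exact_mod_cast hp.one_lt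
  have h1 : 0 < 1 - 1 / (p:ℝ) := by rw [sub_pos, div_lt_one (by linarith)]; exact h
  refine (one_le_inv₀ h1).2 ?_
  have : 0 < 1 / (p:ℝ) := by positivity
  linarith

lemma one_le_prod_real {α : Type*} (s : Finset α) (f : α → ℝ) (h : ∀ x ∈ s, 1 ≤ f x) :
    1 ≤ ∏ x ∈ s, f x := by
  calc (1:ℝ) = ∏ x ∈ s, 1 := by simp
    _ ≤ _ := prod_le_prod (fun _ _ => zero_le_one) h

lemma prod_biUnion_le {α : Type*} [DecidableEq α] (s : Finset α) (t : α → Finset ℕ) (f : ℕ → ℝ)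
    (h : ∀ x ∈ s, ∀ p ∈ t x, 1 ≤ f p) :
    ∏ p ∈ s.biUnion t, f p ≤ ∏ x ∈ s, ∏ p ∈ t x, f p := by
  induction s using Finset.induction_on with
  | empty => simp
  | insert a s ha ih =>
    have ih := ih fun x hx => h x (mem_insert_of_mem hx)
    rw [biUnion_insert, prod_insert ha]
    have h1 : 1 ≤ ∏ p ∈ t a ∩ s.biUnion t, f p :=
      one_le_prod_real _ _ fun p hp => h a (mem_insert_self _ _) p (mem_inter.1 hp).1
    have h2 := prod_union_inter (s₁ := t a) (s₂ := s.biUnion t) (f := f)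
    have h3 : 1 ≤ ∏ p ∈ t a ∪ s.biUnion t, f p := by
      refine one_le_prod_real _ _ fun p hp => ?_
      rcases mem_union.1 hp with hp | hp
      · exact h a (mem_insert_self _ _) p hp
      · obtain ⟨x, hx, hpx⟩ := mem_biUnion.1 hp
        exact h x (mem_insert_of_mem hx) p hpx
    have h4 : 1 ≤ ∏ p ∈ t a, f p := one_le_prod_real _ _ fun p hp => h a (mem_insert_self _ _) p hp
    calc _ ≤ (∏ p ∈ t a ∪ s.biUnion t, f p) * ∏ p ∈ t a ∩ s.biUnion t, f p :=
          le_mul_of_one_le_right (by linarith) h1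
      _ = _ := h2
      _ ≤ _ := mul_le_mul_of_nonneg_left ih (by linarith)

lemma prod_le_add {α : Type*} (s : Finset α) (y : α → ℝ) (N : ℕ) (hN : s.card ≤ N)
    (hy : ∀ x ∈ s, 1 ≤ y x) : ∏ x ∈ s, y x ≤ 1 + ∑ x ∈ s, (y x ^ N - 1) := by
  have hnn : ∀ x ∈ s, 0 ≤ y x ^ N - 1 := fun x hx => by
    have := one_le_pow₀ (hy x hx) (n := N); linarith
  rcases s.eq_empty_or_nonempty with rfl | hs
  · simp
  · obtain ⟨x0, hx0, hmax⟩ := s.exists_max_image y hs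
    calc ∏ x ∈ s, y x ≤ ∏ x ∈ s, y x0 :=
          prod_le_prod (fun x hx => by linarith [hy x hx]) hmax
      _ = y x0 ^ s.card := by simp
      _ ≤ y x0 ^ N := pow_le_pow_right₀ (hy x0 hx0) hN
      _ = 1 + (y x0 ^ N - 1) := by ring
      _ ≤ _ := by
          have := single_le_sum hnn hx0
          linarith

lemma aux_ineq (a D p : ℝ) (ha : 1 ≤ a) (hD : 2 * D ≤ a) (hp : p = a * a) (hD0 : 0 ≤ D) :
    1 ≤ (1 + 1 / a) * (1 + D * -(1 / p)) := by
  subst hp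
  have ha0 : 0 < a := by linarith
  have : (1 + 1 / a) * (1 + D * -(1 / (a * a))) - 1 = (a * a - D * a - D) / (a * a * a) := by
    field_simp
    ring
  have h2 : 0 ≤ (a * a - D * a - D) / (a * a * a) := by
    apply div_nonneg _ (by positivity)
    nlinarith
  linarith

lemma cc_pow_le {p D : ℕ} (hp : p.Prime) (hD : 4 * D ^ 2 ≤ p) : cc p ^ D ≤ 1 + 1 / √(p:ℝ) := by
  have h : (1:ℝ) < p := by exact_mod_cast hp.one_lt
  have h1 : 0 < 1 - 1 / (p:ℝ) := by rw [sub_pos, div_lt_one (by linarith)]; exact h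
  have hs : 0 < √(p:ℝ) := Real.sqrt_pos.2 (by linarith)
  have hss : √(p:ℝ) * √p = p := Real.mul_self_sqrt (by linarith)
  unfold cc
  rw [inv_pow, inv_le_iff_one_le_mul₀ (pow_pos h1 D)]
  have hb := one_add_mul_le_pow (a := -(1 / (p:ℝ))) (by
    have : 1 / (p:ℝ) ≤ 1 := by rw [div_le_one (by linarith)]; exact h.le
    linarith) D
  have hD' : 2 * (D:ℝ) ≤ √(p:ℝ) := by
    refine Real.le_sqrt_of_sq_le ?_
    have : ((4 * D ^ 2 : ℕ) : ℝ) ≤ p := by exact_mod_cast hD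
    push_cast at this
    linarith
  have hs1 : 1 ≤ √(p:ℝ) := by
    rw [Real.one_le_sqrt]; exact h.le
  calc (1:ℝ) ≤ (1 + 1 / √(p:ℝ)) * (1 + D * -(1 / (p:ℝ))) := by
        exact aux_ineq _ _ _ hs1 hD' hss.symm (Nat.cast_nonneg _)
    _ ≤ _ := by
        refine mul_le_mul_of_nonneg_left ?_ (by positivity)
        rw [sub_eq_add_neg]; exact hb

noncomputable def DD (w H Q : ℕ) : Finset ℕ := (Ioc w H).filter (fun d => Nat.Coprime d Q)

lemma one_diff (Q w H n D : ℕ) (hQ : 0 < Q) (hw : ∀ p, p.Prime → p ≤ w → p ∣ Q)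
    (hD : 4 * D ^ 2 ≤ w) (hn : 0 < n) (hnH : n ≤ H) :
    ∏ p ∈ n.primeFactors \ Q.primeFactors, cc p ^ D ≤
      1 + ∑ d ∈ (DD w H Q).filter (fun d => d ∣ n), 1 / √(d:ℝ) := by
  classical
  set T := n.primeFactors \ Q.primeFactors with hT
  have hTp : ∀ p ∈ T, p.Prime ∧ p ∣ n ∧ ¬ p ∣ Q ∧ w < p := by
    intro p hp
    simp only [hT, Finset.mem_sdiff, Nat.mem_primeFactors] at hp
    have h3 : ¬ p ∣ Q := fun h => hp.2 ⟨hp.1.1, h, hQ.ne'⟩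
    refine ⟨hp.1.1, hp.1.2.1, h3, ?_⟩
    by_contra hcon
    exact h3 (hw p hp.1.1 (by omega))
  calc ∏ p ∈ T, cc p ^ D ≤ ∏ p ∈ T, (1 + 1 / √(p:ℝ)) := by
        refine prod_le_prod (fun p hp => ?_) fun p hp => ?_
        · have := cc_one_le (hTp p hp).1; positivity
        · exact cc_pow_le (hTp p hp).1 (hD.trans (hTp p hp).2.2.2.le)
    _ = ∑ t ∈ T.powerset, ∏ p ∈ t, 1 / √(p:ℝ) := prod_one_add _
    _ = ∑ t ∈ T.powerset, 1 / √((∏ p ∈ t, p : ℕ):ℝ) := by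
        refine sum_congr rfl fun t _ => ?_
        rw [Nat.cast_prod, Real.sqrt_prod _ (fun _ _ => by positivity), prod_div_distrib]
        simp
    _ = 1 + ∑ t ∈ T.powerset.erase ∅, 1 / √((∏ p ∈ t, p : ℕ):ℝ) := by
        rw [← add_sum_erase _ _ (empty_mem_powerset T)]; simp
    _ ≤ _ := by
        gcongr
        have hinj : Set.InjOn (fun t : Finset ℕ => ∏ p ∈ t, p) (T.powerset.erase ∅ : Set (Finset ℕ)) := by
          intro a ha b hb hab
          rw [mem_coe, mem_erase, mem_powerset] at ha hb
          rw [← Nat.primeFactors_prod (fun p hp => (hTp p (ha.2 hp)).1),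
            ← Nat.primeFactors_prod (fun p hp => (hTp p (hb.2 hp)).1)]
          exact congrArg Nat.primeFactors hab
        have e := sum_image (f := fun d : ℕ => 1 / √(d:ℝ)) hinj
        rw [← e]
        refine Finset.sum_le_sum_of_subset_of_nonneg ?_ fun _ _ _ => by positivity
        intro d hd
        obtain ⟨t, ht, rfl⟩ := mem_image.1 hd
        rw [mem_erase, mem_powerset] at ht
        obtain ⟨ht0, htT⟩ := ht
        have hdn : ∏ p ∈ t, p ∣ n := by
          refine Finset.prod_primes_dvd n (fun p hp => (hTp p (htT hp)).1.prime)
            (fun p hp => (hTp p (htT hp)).2.1)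
        have hpos : 0 < ∏ p ∈ t, p := prod_pos fun p hp => (hTp p (htT hp)).1.pos
        obtain ⟨p, hp⟩ := nonempty_iff_ne_empty.2 ht0
        rw [mem_filter, DD, mem_filter, mem_Ioc]
        refine ⟨⟨⟨?_, (Nat.le_of_dvd hn hdn).trans hnH⟩, ?_⟩, hdn⟩
        · exact (hTp p (htT hp)).2.2.2.trans_le (Nat.le_of_dvd hpos (dvd_prod_of_mem _ hp))
        · exact Nat.Coprime.prod_left fun p hp =>
            ((hTp p (htT hp)).1.coprime_iff_not_dvd).2 (hTp p (htT hp)).2.2.1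

def Pr (m : ℕ) : Finset (Fin m × Fin m) := univ.filter (fun x => x.1 < x.2)

lemma Pr_card (m : ℕ) : (Pr m).card ≤ m ^ 2 := by
  refine (card_le_card (filter_subset _ _)).trans ?_
  simp [sq]

def BB (m Q : ℕ) (h : Fin m → ℕ) : ℕ := Q * ∏ x ∈ Pr m, (h x.2 - h x.1)

lemma BB_ne (m Q : ℕ) (hQ : 0 < Q) (h : Fin m → ℕ) (hmono : StrictMono h) : BB m Q h ≠ 0 := by
  refine mul_ne_zero hQ.ne' (prod_ne_zero_iff.2 fun x hx => ?_)
  have := hmono (mem_filter.1 hx).2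
  omega

lemma BB_dvd (m Q : ℕ) (h : Fin m → ℕ) (hmono : StrictMono h) (p : ℕ) (i j : Fin m) (hij : i ≠ j)
    (hd : (p:ℤ) ∣ (h i : ℤ) - h j) : p ∣ BB m Q h := by
  have key : ∀ i j : Fin m, i < j → (p:ℤ) ∣ (h i : ℤ) - h j → p ∣ BB m Q h := by
    intro i j hij hd
    have hlt := hmono hij
    have : (p:ℤ) ∣ ((h j - h i : ℕ) : ℤ) := by
      rw [Nat.cast_sub hlt.le]; rw [← dvd_neg]; simpa using hd
    have h1 : p ∣ h j - h i := by exact_mod_cast this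
    have hmem : (i, j) ∈ Pr m := by simp [Pr, hij]
    exact (h1.trans (dvd_prod_of_mem (fun x : Fin m × Fin m => h x.2 - h x.1) hmem)).mul_left Q
  rcases lt_or_gt_of_ne hij with h1 | h1
  · exact key i j h1 hd
  · refine key j i h1 ?_
    rw [← dvd_neg]; simpa using hd

theorem sing_bound (m Q w H : ℕ) (hQ : 0 < Q) (hw : ∀ p, p.Prime → p ≤ w → p ∣ Q)
    (hw2 : 4 * (m * m ^ 2) ^ 2 ≤ w) (h : Fin m → ℕ) (hmono : StrictMono h) (hH : ∀ i, h i ≤ H) :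
    1 / (∏ p ∈ (BB m Q h).primeFactors, (1 - 1 / (p:ℝ))) ^ m ≤ ((Q:ℝ) / Q.totient) ^ m *
      (1 + ∑ x ∈ Pr m, ∑ d ∈ (DD w H Q).filter (fun d => d ∣ h x.2 - h x.1), 1 / √(d:ℝ)) := by
  classical
  have hprod : ∀ s : Finset ℕ, 1 / (∏ p ∈ s, (1 - 1 / (p:ℝ))) ^ m = (∏ p ∈ s, cc p) ^ m := by
    intro s
    simp only [cc, prod_inv_distrib, inv_pow, one_div]
  rw [hprod]
  have hB0 := BB_ne m Q hQ h hmono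
  have hQtot : ∏ p ∈ Q.primeFactors, cc p = (Q:ℝ) / Q.totient := by
    have h1 := Nat.totient_eq_mul_prod_factors Q
    have h2 : (Q.totient : ℝ) = Q * ∏ p ∈ Q.primeFactors, (1 - (p:ℝ)⁻¹) := by
      have := congrArg (fun x : ℚ => (x : ℝ)) h1
      push_cast at this
      exact this
    have hQ' : (Q:ℝ) ≠ 0 := by positivity
    simp only [cc, prod_inv_distrib, one_div]
    rw [h2, div_mul_eq_div_div, div_self hQ', one_div]
  have hpr : ∀ n : ℕ, ∀ p ∈ n.primeFactors, 1 ≤ cc p := fun n p hp =>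
    cc_one_le (Nat.prime_of_mem_primeFactors hp)
  have hsubset : (BB m Q h).primeFactors ⊆ Q.primeFactors ∪
      (Pr m).biUnion (fun x => (h x.2 - h x.1).primeFactors \ Q.primeFactors) := by
    intro p hp
    have hp' := Nat.mem_primeFactors.1 hp
    by_cases hpQ : p ∈ Q.primeFactors
    · exact mem_union_left _ hpQ
    · refine mem_union_right _ ?_
      have h1 : ¬ p ∣ Q := fun hd => hpQ (Nat.mem_primeFactors.2 ⟨hp'.1, hd, hQ.ne'⟩)
      have h2 := (hp'.1.dvd_mul.1 hp'.2.1).resolve_left h1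
      obtain ⟨x, hx, hpx⟩ := (hp'.1.prime.dvd_finsetProd_iff _).1 h2
      refine mem_biUnion.2 ⟨x, hx, mem_sdiff.2 ⟨Nat.mem_primeFactors.2 ⟨hp'.1, hpx, ?_⟩, hpQ⟩⟩
      have := hmono (mem_filter.1 hx).2
      omega
  set U := (Pr m).biUnion (fun x => (h x.2 - h x.1).primeFactors \ Q.primeFactors) with hU
  have hUone : ∀ p ∈ U, 1 ≤ cc p := by
    intro p hp
    obtain ⟨x, _, hpx⟩ := mem_biUnion.1 hp
    exact hpr _ p (mem_sdiff.1 hpx).1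
  have hdisj : Disjoint Q.primeFactors U := by
    rw [Finset.disjoint_right]
    intro p hp
    obtain ⟨x, _, hpx⟩ := mem_biUnion.1 hp
    exact (mem_sdiff.1 hpx).2
  have h1 : ∏ p ∈ (BB m Q h).primeFactors, cc p ≤ (∏ p ∈ Q.primeFactors, cc p) * ∏ p ∈ U, cc p := by
    rw [← prod_union hdisj, ← prod_sdiff hsubset]
    refine le_mul_of_one_le_left ?_ ?_
    · exact (zero_le_one.trans (one_le_prod_real _ _ (hpr _)))
    · refine one_le_prod_real _ _ fun p hp => ?_
      rcases mem_union.1 (mem_sdiff.1 hp).1 with hp | hp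
      · exact hpr _ p hp
      · exact hUone p hp
  have h2 : (∏ p ∈ U, cc p) ^ m ≤
      1 + ∑ x ∈ Pr m, ∑ d ∈ (DD w H Q).filter (fun d => d ∣ h x.2 - h x.1), 1 / √(d:ℝ) := by
    rw [← prod_pow]
    refine (prod_biUnion_le _ _ _ fun x _ p hp =>
      one_le_pow₀ (hpr _ p (mem_sdiff.1 hp).1)).trans ?_
    refine (prod_le_add _ _ (m ^ 2) (Pr_card m) fun x _ => one_le_prod_real _ _ fun p hp =>
      one_le_pow₀ (hpr _ p (mem_sdiff.1 hp).1)).trans ?_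
    gcongr with x hx
    have hlt := hmono (mem_filter.1 hx).2
    have := one_diff Q w H (h x.2 - h x.1) (m * m ^ 2) hQ hw hw2 (by omega)
      ((Nat.sub_le _ _).trans (hH _))
    rw [← prod_pow]
    simp only [← pow_mul]
    linarith
  calc _ ≤ ((∏ p ∈ Q.primeFactors, cc p) * ∏ p ∈ U, cc p) ^ m := by
        refine pow_le_pow_left₀ (zero_le_one.trans (one_le_prod_real _ _ (hpr _))) h1 m
    _ = ((Q:ℝ) / Q.totient) ^ m * (∏ p ∈ U, cc p) ^ m := by rw [mul_pow, hQtot]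
    _ ≤ _ := mul_le_mul_of_nonneg_left h2 (by positivity)

end SV


namespace SV
open Finset

lemma geom_cong (s : ℝ) (hs : 0 < s) (D : ℕ) (hD : 0 < D) (T : Finset ℕ)
    (hT : ∀ b ∈ T, ∀ c ∈ T, b ≡ c [MOD D]) :
    ∑ b ∈ T, Real.exp (-(s * b)) ≤ 1 + 1 / (s * D) := by
  classical
  have hD' : (0:ℝ) < D := by exact_mod_cast hD
  set r := Real.exp (-(s * D)) with hr
  have hr0 : 0 < r := Real.exp_pos _
  have hr1 : r < 1 := by rw [hr, Real.exp_lt_one_iff]; nlinarith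
  have hinj : Set.InjOn (fun b => b / D) (T : Set ℕ) := by
    intro b hb c hc h
    have h1 : b % D = c % D := hT b hb c hc
    have h2 : b / D = c / D := h
    rw [← Nat.div_add_mod b D, ← Nat.div_add_mod c D, h1, h2]
  have h1 : ∑ b ∈ T, Real.exp (-(s * b)) ≤ ∑ n ∈ T.image (fun b => b / D), r ^ n := by
    rw [sum_image hinj]
    refine sum_le_sum fun b _ => ?_
    rw [hr, ← Real.exp_nat_mul, Real.exp_le_exp]
    have : ((D * (b / D) : ℕ) : ℝ) ≤ b := by exact_mod_cast Nat.mul_div_le b D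
    push_cast at this
    nlinarith
  have h2 : ∑ n ∈ T.image (fun b => b / D), r ^ n ≤ (1 - r)⁻¹ := by
    rw [← tsum_geometric_of_lt_one hr0.le hr1]
    exact (summable_geometric_of_lt_one hr0.le hr1).sum_le_tsum _ fun _ _ => by positivity
  refine (h1.trans h2).trans ?_
  have hy : 0 < s * D := by positivity
  have h3 : r * (1 + s * D) ≤ 1 := by
    have := Real.add_one_le_exp (s * D)
    calc r * (1 + s * D) ≤ r * Real.exp (s * D) := by
          apply mul_le_mul_of_nonneg_left _ hr0.le; linarith
      _ = 1 := by rw [hr, ← Real.exp_add]; simp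
  have h4 : (1:ℝ) + 1 / (s * D) = (1 + s * D) / (s * D) := by field_simp; ring
  rw [h4, inv_eq_one_div, div_le_div_iff₀ (by linarith) hy]
  nlinarith

lemma gap_sum_one (n : ℕ) (s : ℝ) (hs : 0 < s) (Q : ℕ) (hQ : 0 < Q) (t : Fin n → Finset ℕ)
    (ht : ∀ l, ∀ b ∈ t l, ∀ c ∈ t l, b ≡ c [MOD Q]) :
    ∑ g ∈ Fintype.piFinset t, ∏ l, Real.exp (-(s * g l)) ≤ (1 + 1 / (s * Q)) ^ n := by
  rw [← prod_univ_sum t (fun _ b => Real.exp (-(s * (b:ℕ))))]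
  calc _ ≤ ∏ l : Fin n, (1 + 1 / (s * Q)) :=
        prod_le_prod (fun _ _ => sum_nonneg fun _ _ => (Real.exp_pos _).le)
          fun l _ => geom_cong s hs Q hQ _ (ht l)
    _ = _ := by simp

lemma gap_sum_two (n : ℕ) (s : ℝ) (hs : 0 < s) (Q d : ℕ) (hQ : 0 < Q) (hd : 0 < d)
    (hQd : Nat.Coprime d Q) (t : Fin (n+1) → Finset ℕ)
    (ht : ∀ l, ∀ b ∈ t l, ∀ c ∈ t l, b ≡ c [MOD Q]) (i0 : Fin (n+1))
    (P : (Fin (n+1) → ℕ) → Prop) [DecidablePred P]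
    (hP : ∀ g g', P g → P g' → (∀ l, l ≠ i0 → g l = g' l) → g i0 ≡ g' i0 [MOD d]) :
    ∑ g ∈ (Fintype.piFinset t).filter P, ∏ l, Real.exp (-(s * g l)) ≤
      (1 + 1 / (s * Q)) ^ n * (1 + 1 / (s * (Q * d : ℕ))) := by
  classical
  have hmap : ∀ g ∈ (Fintype.piFinset t).filter P,
      i0.removeNth g ∈ Fintype.piFinset (fun l => t (i0.succAbove l)) := by
    intro g hg
    rw [mem_filter, Fintype.mem_piFinset] at hg
    rw [Fintype.mem_piFinset]
    intro l
    exact hg.1 _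
  rw [← sum_fiberwise_of_maps_to hmap]
  calc _ ≤ ∑ g' ∈ Fintype.piFinset (fun l => t (i0.succAbove l)),
        (∏ l, Real.exp (-(s * g' l))) * (1 + 1 / (s * (Q * d : ℕ))) := by
        refine sum_le_sum fun g' _ => ?_
        set F := ((Fintype.piFinset t).filter P).filter (fun g => i0.removeNth g = g') with hF
        have hmem : ∀ g ∈ F, (∀ l, g l ∈ t l) ∧ P g ∧ ∀ l, g (i0.succAbove l) = g' l := by
          intro g hg
          rw [hF, mem_filter, mem_filter, Fintype.mem_piFinset] at hg
          refine ⟨hg.1.1, hg.1.2, fun l => ?_⟩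
          rw [← hg.2]; rfl
        have hagree : ∀ g ∈ F, ∀ g2 ∈ F, ∀ l, l ≠ i0 → g l = g2 l := by
          intro g hg g2 hg2 l hl
          obtain ⟨l', rfl⟩ := Fin.exists_succAbove_eq hl
          rw [(hmem g hg).2.2, (hmem g2 hg2).2.2]
        have hinj : Set.InjOn (fun g : Fin (n+1) → ℕ => g i0) (F : Set (Fin (n+1) → ℕ)) := by
          intro g hg g2 hg2 h
          funext l
          by_cases hl : l = i0
          · subst hl; exact h
          · exact hagree g hg g2 hg2 l hl
        calc ∑ g ∈ F, ∏ l, Real.exp (-(s * g l))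
            = ∑ g ∈ F, (∏ l, Real.exp (-(s * g' l))) * Real.exp (-(s * g i0)) := by
              refine sum_congr rfl fun g hg => ?_
              rw [Fin.prod_univ_succAbove _ i0, mul_comm]
              congr 1
              refine prod_congr rfl fun l _ => ?_
              rw [(hmem g hg).2.2]
          _ = (∏ l, Real.exp (-(s * g' l))) *
                ∑ b ∈ F.image (fun g => g i0), Real.exp (-(s * b)) := by
              rw [sum_image hinj, mul_sum]
          _ ≤ _ := by
              refine mul_le_mul_of_nonneg_left ?_ (prod_nonneg fun _ _ => (Real.exp_pos _).le)
              refine geom_cong s hs (Q * d) (by positivity) _ ?_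
              intro b hb c hc
              obtain ⟨g, hg, rfl⟩ := mem_image.1 hb
              obtain ⟨g2, hg2, rfl⟩ := mem_image.1 hc
              refine (Nat.modEq_and_modEq_iff_modEq_mul hQd.symm).1 ⟨?_, ?_⟩
              · exact ht i0 _ ((hmem g hg).1 i0) _ ((hmem g2 hg2).1 i0)
              · exact hP g g2 (hmem g hg).2.1 (hmem g2 hg2).2.1 (hagree g hg g2 hg2)
    _ = (∑ g' ∈ Fintype.piFinset (fun l => t (i0.succAbove l)),
        ∏ l, Real.exp (-(s * g' l))) * (1 + 1 / (s * (Q * d : ℕ))) := by rw [sum_mul]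
    _ ≤ _ := by
        refine mul_le_mul_of_nonneg_right ?_ (by positivity)
        exact gap_sum_one n s hs Q hQ _ (fun l => ht _)

/-- offsets -/
def off {k : ℕ} (g : Fin k → ℕ) (i : Fin (k+1)) : ℕ :=
  ∑ l ∈ univ.filter (fun l : Fin k => l.val < i.val), g l

lemma off_sub {k : ℕ} (g : Fin k → ℕ) (i j : Fin (k+1)) (hij : i < j) :
    off g j = off g i + ∑ l ∈ univ.filter (fun l : Fin k => i.val ≤ l.val ∧ l.val < j.val), g l := by
  classical
  unfold off
  rw [← sum_union]
  · congr 1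
    ext l
    have : i.val < j.val := hij
    simp only [mem_filter, mem_univ, true_and, mem_union]
    omega
  · rw [Finset.disjoint_left]
    intro l
    simp only [mem_filter, mem_univ, true_and]
    omega

lemma off_strictMono {k : ℕ} (g : Fin k → ℕ) (hg : ∀ l, 1 ≤ g l) : StrictMono (off g) := by
  intro i j hij
  rw [off_sub g i j hij]
  have hlt : i.val < j.val := hij
  have hik : i.val < k := by omega
  have : 1 ≤ ∑ l ∈ univ.filter (fun l : Fin k => i.val ≤ l.val ∧ l.val < j.val), g l := by
    refine (hg ⟨i, hik⟩).trans ?_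
    exact single_le_sum (f := g) (fun _ _ => Nat.zero_le _) (by simp [hlt])
  omega

lemma sum_inv_sqrt (H : ℕ) : ∑ d ∈ Ioc 0 H, 1 / √(d:ℝ) ≤ 2 * √(H:ℝ) := by
  induction H with
  | zero => simp
  | succ n ih =>
    rw [← insert_Ioc_right_eq_Ioc_add_one (Nat.zero_le n), sum_insert (by simp)]
    have h1 : 0 < √((n+1:ℕ):ℝ) := Real.sqrt_pos.2 (by positivity)
    have h2 : √((n+1:ℕ):ℝ) * √((n+1:ℕ):ℝ) = n + 1 := by
      rw [Real.mul_self_sqrt (by positivity)]; push_cast; ring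
    have h3 : √(n:ℝ) * √(n:ℝ) = n := Real.mul_self_sqrt (by positivity)
    have h0 : 0 ≤ √(n:ℝ) := Real.sqrt_nonneg _
    have : 1 / √((n+1:ℕ):ℝ) ≤ 2 * (√((n+1:ℕ):ℝ) - √(n:ℝ)) := by
      rw [div_le_iff₀ h1]
      nlinarith [sq_nonneg (√((n+1:ℕ):ℝ) - √(n:ℝ))]
    linarith

theorem gap_sum (k : ℕ) (s : ℝ) (hs : 0 < s) (Q w H : ℕ) (hQ : 0 < Q) (τ : ℝ)
    (hτ : ∀ R : ℕ, ∑ v ∈ Ioc w R, 1 / ((v:ℝ) * √v) ≤ τ) (t : Fin k → Finset ℕ)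
    (ht : ∀ l, ∀ b ∈ t l, ∀ c ∈ t l, b ≡ c [MOD Q]) :
    ∑ g ∈ Fintype.piFinset t, (∏ l, Real.exp (-(s * g l))) *
      (1 + ∑ x ∈ Pr (k+1), ∑ d ∈ (DD w H Q).filter (fun d => d ∣ off g x.2 - off g x.1), 1 / √(d:ℝ)) ≤
    (1 + 1 / (s * Q)) ^ k * (1 + (k+1) ^ 2 * (τ + 2 * √(H:ℝ) * s * Q)) := by
  classical
  have hU : 0 < 1 + 1 / (s * Q) := by positivity
  have hQ' : (0:ℝ) < Q := by exact_mod_cast hQ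
  have hτ0 : 0 ≤ τ := by simpa using hτ 0
  simp only [mul_add, mul_one, sum_add_distrib]
  refine add_le_add (gap_sum_one k s hs Q hQ t ht) ?_
  simp only [mul_sum]
  rw [sum_comm]
  have hpair : ∀ x ∈ Pr (k+1), ∑ g ∈ Fintype.piFinset t,
      ∑ d ∈ (DD w H Q).filter (fun d => d ∣ off g x.2 - off g x.1),
        (∏ l, Real.exp (-(s * g l))) * (1 / √(d:ℝ)) ≤
      (1 + 1 / (s * Q)) ^ k * (τ + 2 * √(H:ℝ) * s * Q) := by
    intro x hx
    have hlt : x.1 < x.2 := (mem_filter.1 hx).2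
    obtain ⟨i, j⟩ := x
    simp only at hlt ⊢
    have hik : i.val < k := by have := j.2; have : i.val < j.val := hlt; omega
    obtain ⟨n, rfl⟩ : ∃ n, k = n + 1 := ⟨k - 1, by omega⟩
    simp only [sum_filter]
    rw [sum_comm]
    calc _ = ∑ d ∈ DD w H Q, (1 / √(d:ℝ)) *
          ∑ g ∈ (Fintype.piFinset t).filter (fun g => d ∣ off g j - off g i),
            ∏ l, Real.exp (-(s * g l)) := by
          refine sum_congr rfl fun d _ => ?_
          rw [mul_sum, sum_filter]
          refine sum_congr rfl fun g _ => ?_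
          split_ifs <;> ring
      _ ≤ ∑ d ∈ DD w H Q, (1 / √(d:ℝ)) *
          ((1 + 1 / (s * Q)) ^ n * (1 + 1 / (s * (Q * d : ℕ)))) := by
          refine sum_le_sum fun d hd => mul_le_mul_of_nonneg_left ?_ (by positivity)
          rw [DD, mem_filter, mem_Ioc] at hd
          refine gap_sum_two n s hs Q d hQ (by omega) hd.2 t ht ⟨i, hik⟩ _ ?_
          intro g g' h1 h2 h3
          rw [off_sub g i j hlt, Nat.add_sub_cancel_left] at h1
          rw [off_sub g' i j hlt, Nat.add_sub_cancel_left] at h2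
          have hmem : (⟨i, hik⟩ : Fin (n+1)) ∈ univ.filter
              (fun l : Fin (n+1) => i.val ≤ l.val ∧ l.val < j.val) := by
            simp only [mem_filter, mem_univ, true_and, le_refl]; exact hlt
          rw [← add_sum_erase _ _ hmem] at h1 h2
          have h4 : ∑ l ∈ (univ.filter
              (fun l : Fin (n+1) => i.val ≤ l.val ∧ l.val < j.val)).erase ⟨i, hik⟩, g l =
              ∑ l ∈ (univ.filter
              (fun l : Fin (n+1) => i.val ≤ l.val ∧ l.val < j.val)).erase ⟨i, hik⟩, g' l :=
            sum_congr rfl fun l hl => h3 l (mem_erase.1 hl).1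
          rw [h4] at h1
          exact Nat.ModEq.add_right_cancel' _
            (((Nat.modEq_zero_iff_dvd.2 h1)).trans (Nat.modEq_zero_iff_dvd.2 h2).symm)
      _ ≤ ∑ d ∈ DD w H Q, (1 + 1 / (s * Q)) ^ (n+1) * (1 / ((d:ℝ) * √(d:ℝ)) + 1 / √(d:ℝ) * (s * Q)) := by
          refine sum_le_sum fun d hd => ?_
          rw [DD, mem_filter, mem_Ioc] at hd
          have hd0 : (0:ℝ) < d := by exact_mod_cast (by omega : 0 < d)
          have h1 : (1:ℝ) + 1 / (s * (Q * d : ℕ)) ≤ (1 + 1 / (s * Q)) * (1 / d + s * Q) := by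
            push_cast
            have : (1 + 1 / (s * Q)) * (1 / d + s * Q) - (1 + 1 / (s * (Q * d))) = 1 / d + s * Q := by
              field_simp; ring
            have : 0 < 1 / d + s * Q := by positivity
            linarith
          calc _ ≤ (1 / √(d:ℝ)) * ((1 + 1 / (s * Q)) ^ n * ((1 + 1 / (s * Q)) * (1 / d + s * Q))) := by
                gcongr
            _ = _ := by
                have : 1 / ((d:ℝ) * √(d:ℝ)) = 1 / d * (1 / √(d:ℝ)) := by
                  rw [div_mul_div_comm]; simp
                rw [this]; ring
      _ ≤ _ := by
          rw [← mul_sum, sum_add_distrib, ← sum_mul]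
          refine mul_le_mul_of_nonneg_left ?_ (by positivity)
          refine add_le_add ?_ ?_
          · refine le_trans (sum_le_sum_of_subset_of_nonneg (filter_subset _ _) fun _ _ _ => by positivity) (hτ H)
          · rw [mul_assoc]
            refine mul_le_mul_of_nonneg_right ?_ (by positivity)
            refine le_trans (sum_le_sum_of_subset_of_nonneg ?_ fun _ _ _ => by positivity) (sum_inv_sqrt H)
            intro d hd
            rw [DD, mem_filter, mem_Ioc] at hd
            rw [mem_Ioc]; omega
  refine (sum_le_sum hpair).trans ?_
  rw [sum_const, nsmul_eq_mul]
  have hc : ((Pr (k+1)).card : ℝ) ≤ (k+1) ^ 2 := by exact_mod_cast Pr_card (k+1)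
  have hX : 0 ≤ τ + 2 * √(H:ℝ) * s * Q := by positivity
  have hUk : 0 ≤ (1 + 1 / (s * Q)) ^ k := by positivity
  have := mul_le_mul_of_nonneg_right hc (mul_nonneg hUk hX)
  linarith

end SV


namespace SV
open Finset

noncomputable abbrev pp (n : ℕ) : ℕ := Nat.nth Nat.Prime n

lemma pp_prime (n : ℕ) : (pp n).Prime := Nat.prime_nth_prime n

lemma pp_mono : StrictMono pp := Nat.nth_strictMono Nat.infinite_setOfPred_prime

noncomputable def gaps (k n : ℕ) (l : Fin k) : ℕ := pp (n + l + 1) - pp (n + l)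

lemma off_gaps_nat (k n : ℕ) (i : ℕ) (hi : i < k + 1) :
    pp n + off (gaps k n) ⟨i, hi⟩ = pp (n + i) := by
  induction i with
  | zero => simp [off]
  | succ i ih =>
    have hi' : i < k + 1 := by omega
    have hik : i < k := by omega
    rw [off_sub _ ⟨i, hi'⟩ ⟨i+1, hi⟩ (by simp [Fin.lt_def]), ← add_assoc, ih hi']
    have : univ.filter (fun l : Fin k => i ≤ l.val ∧ l.val < i + 1) = {⟨i, hik⟩} := by
      ext l
      simp only [mem_filter, mem_univ, true_and, mem_singleton, Fin.ext_iff]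
      omega
    simp only at this ⊢
    rw [this, sum_singleton]
    unfold gaps
    have := (pp_mono (show n + i < n + i + 1 by omega)).le
    simp only
    rw [Nat.add_sub_cancel' this]; rfl

lemma off_gaps (k n : ℕ) (i : Fin (k+1)) : pp n + off (gaps k n) i = pp (n + i) :=
  off_gaps_nat k n i i.2

lemma gaps_pos (k n : ℕ) (l : Fin k) : 1 ≤ gaps k n l := by
  have := pp_mono (show n + l < n + l + 1 by omega)
  unfold gaps; omega

noncomputable def span (k n : ℕ) : ℕ := pp (n + k) - pp n

lemma off_last (k n : ℕ) : off (gaps k n) (Fin.last k) = span k n := by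
  have := off_gaps k n (Fin.last k)
  simp only [Fin.val_last] at this
  unfold span; omega

lemma off_last_eq {k : ℕ} (g : Fin k → ℕ) : off g (Fin.last k) = ∑ l, g l := by
  unfold off
  congr 1
  ext l; simp

lemma exp_span (k n : ℕ) (s : ℝ) : ∏ l, Real.exp (-(s * gaps k n l)) = Real.exp (-(s * span k n)) := by
  rw [← Real.exp_sum, ← off_last, off_last_eq, sum_neg_distrib, ← mul_sum, Nat.cast_sum]

theorem type_bound (k Q w H Y x a b : ℕ) (s τ : ℝ) (hs : 0 < s) (hQ : 0 < Q)
    (hw : ∀ p, p.Prime → p ≤ w → p ∣ Q)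
    (hw2 : 4 * ((k+1) * (k+1) ^ 2) ^ 2 ≤ w) (hw4 : (2 * (k+1)) ^ 4 ≤ w)
    (hτ : ∀ R : ℕ, ∑ v ∈ Ioc w R, 1 / ((v:ℝ) * √v) ≤ τ) (hY : 1 < Y)
    (ha : ∀ n, a ≤ n → Y ^ (k+1) < pp n) (hb : ∀ n, n < b → pp (n + k) ≤ x)
    (A : Fin (k+1) → (ZMod Q)ˣ) (𝒩 : Finset ℕ) (h𝒩 : 𝒩 ⊆ Ico a b)
    (hA : ∀ n ∈ 𝒩, ∀ i : Fin (k+1), ((pp (n + i) : ℕ) : ZMod Q) = A i)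
    (hH : ∀ n ∈ 𝒩, span k n ≤ H) :
    ∑ n ∈ 𝒩, Real.exp (-(s * span k n)) ≤ (1 + 1 / (s * Q)) ^ k *
      (((x:ℝ) / Q + 1) * (1 + τ) * ((Q:ℝ) / Q.totient) ^ (k+1) / Real.log Y ^ (k+1) *
        (1 + (k+1) ^ 2 * (τ + 2 * √(H:ℝ) * s * Q)) +
      2 * (((Y^(k+1):ℕ):ℝ)^2*√((Y^(k+1):ℕ):ℝ))) := by
  classical
  have : NeZero Q := ⟨hQ.ne'⟩
  have hτ0 : 0 ≤ τ := by simpa using hτ 0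
  have hlog : 0 < Real.log Y := Real.log_pos (by exact_mod_cast hY)
  set t : Fin k → Finset ℕ := fun l =>
    (Icc 1 H).filter (fun b => (A l.castSucc : ZMod Q) + b = A l.succ) with ht
  have htQ : ∀ l, ∀ b ∈ t l, ∀ c ∈ t l, b ≡ c [MOD Q] := by
    intro l b hb c hc
    simp only [ht, mem_filter] at hb hc
    rw [← ZMod.natCast_eq_natCast_iff]
    exact add_left_cancel (hb.2.trans hc.2.symm)
  have hmap : ∀ n ∈ 𝒩, gaps k n ∈ Fintype.piFinset t := by
    intro n hn
    rw [Fintype.mem_piFinset]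
    intro l
    simp only [ht, mem_filter, mem_Icc]
    refine ⟨⟨gaps_pos k n l, ?_⟩, ?_⟩
    · refine le_trans ?_ (hH n hn)
      rw [← off_last, off_last_eq]
      exact single_le_sum (f := gaps k n) (fun _ _ => Nat.zero_le _) (mem_univ l)
    · have h1 := hA n hn l.castSucc
      have h2 := hA n hn l.succ
      rw [← h1, ← h2, ← Nat.cast_add]
      congr 1
      unfold gaps
      have := (pp_mono (show n + l < n + l + 1 by omega)).le
      simp only [Fin.val_castSucc, Fin.val_succ]
      rw [Nat.add_sub_cancel' this]; rfl
  set C : ℝ := ((x:ℝ) / Q + 1) * (1 + τ) * ((Q:ℝ) / Q.totient) ^ (k+1) / Real.log Y ^ (k+1) with hC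
  have hC0 : 0 ≤ C := by positivity
  set E : ℝ := 2 * (((Y^(k+1):ℕ):ℝ)^2*√((Y^(k+1):ℕ):ℝ)) with hE
  have hE0 : 0 ≤ E := by positivity
  set F : (Fin k → ℕ) → ℝ := fun g => 1 + ∑ x ∈ Pr (k+1),
    ∑ d ∈ (DD w H Q).filter (fun d => d ∣ off g x.2 - off g x.1), 1 / √(d:ℝ) with hF
  have hF0 : ∀ g, 0 ≤ F g := fun g => by
    simp only [hF]
    positivity
  have hcount : ∀ g ∈ Fintype.piFinset t, ((𝒩.filter (fun n => gaps k n = g)).card : ℝ) ≤ C * F g + E := by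
    intro g hg
    set T := 𝒩.filter (fun n => gaps k n = g) with hT
    rcases T.eq_empty_or_nonempty with h0 | ⟨n0, hn0⟩
    · rw [h0]; have := hF0 g; simp only [card_empty, Nat.cast_zero]; positivity
    have hTm : ∀ n ∈ T, n ∈ 𝒩 ∧ gaps k n = g := fun n hn => mem_filter.1 hn
    have hgpos : ∀ l, 1 ≤ g l := by
      intro l; rw [← (hTm n0 hn0).2]; exact gaps_pos k n0 l
    have hmono := off_strictMono g hgpos
    have hoffH : ∀ i, off g i ≤ H := by
      intro i
      refine (hmono.monotone (Fin.le_last i)).trans ?_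
      rw [← (hTm n0 hn0).2, off_last]
      exact hH n0 (hTm n0 hn0).1
    have hres : ∀ n ∈ T, (A 0 : ZMod Q).val + Q * (pp n / Q) = pp n := by
      intro n hn
      have h1 := hA n (hTm n hn).1 0
      simp only [Fin.val_zero, add_zero] at h1
      rw [← h1, ZMod.val_natCast]
      exact Nat.mod_add_div _ _
    have hinj : Set.InjOn (fun n => pp n / Q) (T : Set ℕ) := by
      intro n hn n' hn' h
      have h : pp n / Q = pp n' / Q := h
      apply pp_mono.injective
      rw [← hres n hn, ← hres n' hn', h]
    have hcard : (T.image (fun n => pp n / Q)).card = T.card := card_image_of_injOn hinj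
    have htb := tuple_bound (k+1) Q (BB (k+1) Q (off g)) w Y (A 0 : ZMod Q).val (x / Q + 1)
      (Nat.succ_pos k) (BB_ne _ _ hQ _ hmono) τ hY
      (fun p hp hpw => (hw p hp hpw).mul_right _) hw4 hτ (off g) (Dvd.intro _ rfl)
      (fun p _ i j hij hd => BB_dvd _ _ _ hmono p i j hij hd)
      (T.image (fun n => pp n / Q)) (by
        intro j hj
        obtain ⟨n, hn, rfl⟩ := mem_image.1 hj
        have hn2 := mem_Ico.1 (h𝒩 (hTm n hn).1)
        rw [mem_range, Nat.lt_succ_iff]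
        refine Nat.div_le_div_right (le_trans (pp_mono.monotone (by omega)) (hb n hn2.2)))
      (by
        intro j hj i
        obtain ⟨n, hn, rfl⟩ := mem_image.1 hj
        have hn2 := mem_Ico.1 (h𝒩 (hTm n hn).1)
        rw [hres n hn, ← (hTm n hn).2, off_gaps]
        exact ⟨pp_prime _, ha _ (by omega)⟩)
    rw [hcard] at htb
    have hsb := sing_bound (k+1) Q w H hQ hw hw2 (off g) hmono hoffH
    refine htb.trans ?_
    refine add_le_add ?_ le_rfl
    have hJ : ((x / Q + 1 : ℕ) : ℝ) ≤ (x:ℝ) / Q + 1 := by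
      push_cast
      have := @Nat.cast_div_le ℝ _ _ _ x Q
      linarith
    rw [mul_pow]
    calc _ = ((x / Q + 1 : ℕ) : ℝ) * (1 + τ) * (1 / (∏ p ∈ (BB (k+1) Q (off g)).primeFactors, (1 - 1 / (p:ℝ))) ^ (k+1)) / Real.log Y ^ (k+1) := by
          rw [mul_one_div, div_div]
      _ ≤ ((x:ℝ) / Q + 1) * (1 + τ) * (((Q:ℝ) / Q.totient) ^ (k+1) * F g) / Real.log Y ^ (k+1) := by
          have hp0 : 0 ≤ 1 / (∏ p ∈ (BB (k+1) Q (off g)).primeFactors, (1 - 1 / (p:ℝ))) ^ (k+1) := by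
            refine one_div_nonneg.2 (pow_nonneg (prod_nonneg fun p hp => ?_) _)
            have : (1:ℝ) ≤ p := by exact_mod_cast (Nat.prime_of_mem_primeFactors hp).one_lt.le
            rw [sub_nonneg, div_le_one (by linarith)]; exact this
          gcongr
      _ = C * F g := by rw [hC]; ring
  rw [← sum_fiberwise_of_maps_to hmap]
  calc _ = ∑ g ∈ Fintype.piFinset t, ((𝒩.filter (fun n => gaps k n = g)).card : ℝ) *
        ∏ l, Real.exp (-(s * g l)) := by
        refine sum_congr rfl fun g _ => ?_
        rw [← nsmul_eq_mul, ← sum_const]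
        refine sum_congr rfl fun n hn => ?_
        rw [← (mem_filter.1 hn).2, exp_span]
    _ ≤ ∑ g ∈ Fintype.piFinset t, (C * F g + E) * ∏ l, Real.exp (-(s * g l)) := by
        refine sum_le_sum fun g hg => mul_le_mul_of_nonneg_right (hcount g hg)
          (prod_nonneg fun _ _ => (Real.exp_pos _).le)
    _ = C * ∑ g ∈ Fintype.piFinset t, (∏ l, Real.exp (-(s * g l))) * F g +
        E * ∑ g ∈ Fintype.piFinset t, ∏ l, Real.exp (-(s * g l)) := by
        rw [mul_sum, mul_sum, ← sum_add_distrib]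
        refine sum_congr rfl fun g _ => by ring
    _ ≤ C * ((1 + 1 / (s * Q)) ^ k * (1 + (k+1) ^ 2 * (τ + 2 * √(H:ℝ) * s * Q))) +
        E * (1 + 1 / (s * Q)) ^ k := by
        refine add_le_add (mul_le_mul_of_nonneg_left ?_ hC0) (mul_le_mul_of_nonneg_left ?_ hE0)
        · exact gap_sum k s hs Q w H hQ τ hτ t htQ
        · exact gap_sum_one k s hs Q hQ t htQ
    _ = _ := by ring

end SV


namespace SV
open Finset

lemma span_sum_le (k a b : ℕ) (hab : a ≤ b) :
    (∑ n ∈ Ico a b, span k n) + ∑ j ∈ range k, pp (a + j) = ∑ j ∈ range k, pp (b + j) := by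
  induction b, hab using Nat.le_induction with
  | base => simp
  | succ b hab ih =>
    rw [sum_Ico_succ_top hab]
    have h1 := sum_range_succ (fun j => pp (b + j)) k
    have h2 := sum_range_succ' (fun j => pp (b + j)) k
    have h3 : ∑ j ∈ range k, pp (b + (j + 1)) = ∑ j ∈ range k, pp (b + 1 + j) :=
      sum_congr rfl fun j _ => by congr 1; ring
    have h4 := pp_mono.monotone (show b ≤ b + k by omega)
    unfold span at ih ⊢
    simp only [add_zero] at h2
    omega

lemma span_sum_le' (k a b x : ℕ) (hb : ∀ n, n < b → pp (n + k) ≤ x) :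
    ∑ n ∈ Ico a b, span k n ≤ k * x := by
  rcases lt_or_ge a b with hab | hab
  · have h1 := span_sum_le k a b hab.le
    have h2 : ∑ j ∈ range k, pp (b + j) ≤ ∑ j ∈ range k, x := by
      refine sum_le_sum fun j hj => ?_
      have hj := mem_range.1 hj
      exact (pp_mono.monotone (by omega)).trans (hb (b - 1) (by omega))
    simp at h2
    omega
  · rw [Ico_eq_empty (by omega)]; simp

theorem lower (k a b x H : ℕ) (s : ℝ) (hs : 0 < s) (hb : ∀ n, n < b → pp (n + k) ≤ x)
    (hN : s * x ≤ ((b - a : ℕ) : ℝ)) (hsH : k + 10 ≤ s * H) :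
    s * x * (Real.exp (-k) * (1 - Real.exp (-10))) ≤
      ∑ n ∈ (Ico a b).filter (fun n => span k n ≤ H), Real.exp (-(s * span k n)) := by
  have hpt : ∀ n, Real.exp (-k) * (1 + k - s * span k n) - Real.exp (-k) * Real.exp (-10) ≤
      if span k n ≤ H then Real.exp (-(s * span k n)) else 0 := by
    intro n
    have h1 : Real.exp (-k) * (1 + k - s * span k n) ≤ Real.exp (-(s * span k n)) := by
      have := Real.add_one_le_exp ((k:ℝ) - s * span k n)
      calc _ ≤ Real.exp (-k) * Real.exp ((k:ℝ) - s * span k n) := by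
            apply mul_le_mul_of_nonneg_left _ (Real.exp_pos _).le; linarith
        _ = _ := by rw [← Real.exp_add]; congr 1; ring
    split_ifs with h
    · have := mul_pos (Real.exp_pos (-(k:ℝ))) (Real.exp_pos (-10)); linarith
    · have : Real.exp (-(s * span k n)) ≤ Real.exp (-k) * Real.exp (-10) := by
        rw [← Real.exp_add, Real.exp_le_exp]
        have : (H:ℝ) ≤ span k n := by exact_mod_cast (not_le.1 h).le
        have := mul_le_mul_of_nonneg_left this hs.le
        linarith
      linarith
  rw [sum_filter]
  refine le_trans ?_ (sum_le_sum fun n _ => hpt n)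
  rw [sum_sub_distrib, ← mul_sum, sum_sub_distrib, sum_const, sum_const, ← mul_sum, Nat.card_Ico,
    nsmul_eq_mul, nsmul_eq_mul]
  have h2 : (∑ n ∈ Ico a b, (span k n : ℝ)) ≤ k * x := by exact_mod_cast span_sum_le' k a b x hb
  set N : ℝ := ((b - a : ℕ) : ℝ)
  set S := ∑ n ∈ Ico a b, (span k n : ℝ)
  set e := Real.exp (-(k:ℝ))
  have he : 0 < e := Real.exp_pos _
  set d := Real.exp (-10)
  have hd : d ≤ 1 := by simp [d]
  have h3 : s * S ≤ k * N := by
    calc s * S ≤ s * (k * x) := mul_le_mul_of_nonneg_left h2 hs.le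
      _ = k * (s * x) := by ring
      _ ≤ k * N := mul_le_mul_of_nonneg_left hN (by positivity)
  have h4 : s * x * (e * (1 - d)) ≤ N * (e * (1 - d)) :=
    mul_le_mul_of_nonneg_right hN (mul_nonneg he.le (by linarith))
  have h5 : e * (s * S) ≤ e * (k * N) := mul_le_mul_of_nonneg_left h3 he.le
  nlinarith

lemma sum_biUnion_le' {α : Type*} [DecidableEq α] (s : Finset α) (T : α → Finset ℕ) (f : ℕ → ℝ)
    (hf : ∀ n, 0 ≤ f n) : ∑ n ∈ s.biUnion T, f n ≤ ∑ A ∈ s, ∑ n ∈ T A, f n := by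
  induction s using Finset.induction_on with
  | empty => simp
  | insert a s ha ih =>
    rw [biUnion_insert, sum_insert ha]
    have h2 := sum_union_inter (s₁ := T a) (s₂ := s.biUnion T) (f := f)
    have h3 : 0 ≤ ∑ n ∈ T a ∩ s.biUnion T, f n := sum_nonneg fun n _ => hf n
    linarith

theorem fin_ineq (k Q w H Y x a b : ℕ) (s τ : ℝ) (hs : 0 < s) (hQ : 0 < Q)
    (hw : ∀ p, p.Prime → p ≤ w → p ∣ Q)
    (hw2 : 4 * ((k+1) * (k+1) ^ 2) ^ 2 ≤ w) (hw4 : (2 * (k+1)) ^ 4 ≤ w)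
    (hτ : ∀ R : ℕ, ∑ v ∈ Ioc w R, 1 / ((v:ℝ) * √v) ≤ τ) (hY : 1 < Y)
    (ha : ∀ n, a ≤ n → Y ^ (k+1) < pp n) (hb : ∀ n, n < b → pp (n + k) ≤ x)
    (𝒜 : Finset (Fin (k+1) → (ZMod Q)ˣ))
    (h𝒜 : ∀ n, a ≤ n → ∃ A ∈ 𝒜, ∀ i : Fin (k+1), ((pp (n + i) : ℕ) : ZMod Q) = A i)
    (hN : s * x ≤ ((b - a : ℕ) : ℝ)) (hsH : k + 10 ≤ s * H) :
    s * x * (Real.exp (-k) * (1 - Real.exp (-10))) ≤ 𝒜.card * ((1 + 1 / (s * Q)) ^ k *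
      (((x:ℝ) / Q + 1) * (1 + τ) * ((Q:ℝ) / Q.totient) ^ (k+1) / Real.log Y ^ (k+1) *
        (1 + (k+1) ^ 2 * (τ + 2 * √(H:ℝ) * s * Q)) +
      2 * (((Y^(k+1):ℕ):ℝ)^2*√((Y^(k+1):ℕ):ℝ)))) := by
  classical
  refine (lower k a b x H s hs hb hN hsH).trans ?_
  set 𝒩 := (Ico a b).filter (fun n => span k n ≤ H) with h𝒩
  have hsub : 𝒩 ⊆ 𝒜.biUnion (fun A => 𝒩.filter
      (fun n => ∀ i : Fin (k+1), ((pp (n + i) : ℕ) : ZMod Q) = A i)) := by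
    intro n hn
    obtain ⟨A, hA, h⟩ := h𝒜 n (mem_Ico.1 (mem_filter.1 hn).1).1
    exact mem_biUnion.2 ⟨A, hA, mem_filter.2 ⟨hn, h⟩⟩
  refine (sum_le_sum_of_subset_of_nonneg hsub fun _ _ _ => (Real.exp_pos _).le).trans ?_
  refine (sum_biUnion_le' _ _ _ (fun _ => (Real.exp_pos _).le)).trans ?_
  rw [← nsmul_eq_mul, ← sum_const]
  refine sum_le_sum fun A _ => ?_
  refine type_bound k Q w H Y x a b s τ hs hQ hw hw2 hw4 hτ hY ha hb A _ ?_ ?_ ?_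
  · exact (filter_subset _ _).trans (filter_subset _ _)
  · intro n hn; exact (mem_filter.1 hn).2
  · intro n hn; exact (mem_filter.1 (mem_filter.1 hn).1).2

end SV


namespace SV
open Finset

lemma cheb (k R : ℕ) (hR : 400 ≤ R) (hk : k ≤ R) :
    2 / 3 * ((R ^ 3 : ℕ) : ℝ) / Real.log ((R ^ 3 : ℕ) : ℝ) ≤
      ((Nat.count Nat.Prime (R ^ 3 + 1) - k - Nat.count Nat.Prime (R + 1) : ℕ) : ℝ) := by
  have h1 := Chebyshev.pi_ge (R ^ 3)
  have hR' : (400:ℝ) ≤ R := by exact_mod_cast hR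
  have hk' : (k:ℝ) ≤ R := by exact_mod_cast hk
  have h2 : (Nat.count Nat.Prime (R + 1) : ℝ) ≤ R + 1 := by exact_mod_cast Nat.count_le Nat.Prime
  have h3 : (Nat.count Nat.Prime (R ^ 3 + 1) : ℝ) - k - Nat.count Nat.Prime (R + 1) ≤
      ((Nat.count Nat.Prime (R ^ 3 + 1) - k - Nat.count Nat.Prime (R + 1) : ℕ) : ℝ) := by
    have : Nat.count Nat.Prime (R ^ 3 + 1) ≤ (Nat.count Nat.Prime (R ^ 3 + 1) - k - Nat.count Nat.Prime (R + 1)) + k + Nat.count Nat.Prime (R + 1) := by omega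
    have : (Nat.count Nat.Prime (R ^ 3 + 1) : ℝ) ≤ ((Nat.count Nat.Prime (R ^ 3 + 1) - k - Nat.count Nat.Prime (R + 1) : ℕ) : ℝ) + k + Nat.count Nat.Prime (R + 1) := by exact_mod_cast this
    linarith
  refine le_trans ?_ h3
  have h4 : ((R ^ 3).primeCounting : ℝ) = (Nat.count Nat.Prime (R ^ 3 + 1) : ℝ) := rfl
  rw [h4] at h1
  set P := (Nat.count Nat.Prime (R ^ 3 + 1) : ℝ)
  have hl : Real.log ((R ^ 3 : ℕ) : ℝ) = 3 * Real.log R := by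
    push_cast; rw [Real.log_pow]; norm_num
  have hl1 : Real.log R ≤ R := (Real.log_le_sub_one_of_pos (by linarith)).trans (by linarith)
  have hl0 : 0 < Real.log R := Real.log_pos (by linarith)
  have hl2 : Real.log (((R ^ 3 : ℕ) : ℝ) + 1) ≤ 3 * R := by
    have : Real.log (((R ^ 3 : ℕ) : ℝ) + 1) ≤ Real.log (((R:ℝ) + 1) ^ 3) := by
      apply Real.log_le_log (by positivity)
      push_cast
      nlinarith [sq_nonneg (R:ℝ)]
    rw [Real.log_pow] at this
    have h5 := Real.log_le_sub_one_of_pos (show (0:ℝ) < R + 1 by linarith)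
    push_cast at this ⊢
    linarith
  have hlog2 := Real.log_two_gt_d9
  have hx : ((R ^ 3 : ℕ) : ℝ) = (R:ℝ) ^ 3 := by push_cast; ring
  rw [hl] at h1 ⊢
  rw [div_le_iff₀ (by positivity)] at h1
  rw [div_le_iff₀ (by positivity)]
  rw [hx] at h1 hl2 ⊢
  have h6 : (R:ℝ) ^ 3 * 0.693 ≤ (R:ℝ) ^ 3 * Real.log 2 := by
    apply mul_le_mul_of_nonneg_left _ (by positivity); linarith
  have h7 : (k + (Nat.count Nat.Prime (R + 1) : ℝ)) * (3 * Real.log R) ≤ (3 * R) * (3 * R) := by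
    apply mul_le_mul (by linarith) (by linarith) (by positivity) (by positivity)
  have h8 : 400 * (R:ℝ) ^ 2 ≤ (R:ℝ) ^ 3 := by nlinarith [sq_nonneg (R:ℝ)]
  nlinarith

lemma ev_type (k Q : ℕ) (hQ : 0 < Q) (𝒜 : Finset (Fin (k+1) → (ZMod Q)ˣ))
    (h𝒜 : ∀ A, A ∈ 𝒜 ↔ {n : ℕ | ∀ i : Fin (k+1), ((pp (n + i) : ℕ) : ZMod Q) = A i}.Infinite) :
    ∃ n1 : ℕ, ∀ n, n1 ≤ n → ∃ A ∈ 𝒜, ∀ i : Fin (k+1), ((pp (n + i) : ℕ) : ZMod Q) = A i := by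
  classical
  have : NeZero Q := ⟨hQ.ne'⟩
  have hfin : ({n : ℕ | ∃ A ∉ 𝒜, ∀ i : Fin (k+1), ((pp (n + i) : ℕ) : ZMod Q) = A i}).Finite := by
    have : {n : ℕ | ∃ A ∉ 𝒜, ∀ i : Fin (k+1), ((pp (n + i) : ℕ) : ZMod Q) = A i} =
        ⋃ A ∈ {A | A ∉ 𝒜}, {n : ℕ | ∀ i : Fin (k+1), ((pp (n + i) : ℕ) : ZMod Q) = A i} := by
      ext n; simp
    rw [this]
    refine Set.Finite.biUnion (Set.toFinite _) fun A hA => ?_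
    have hA : A ∉ 𝒜 := hA
    rw [h𝒜, Set.not_infinite] at hA
    exact hA
  obtain ⟨n0, hn0⟩ := hfin.bddAbove
  refine ⟨max (n0 + 1) (Q + 1), fun n hn => ?_⟩
  have hcop : ∀ i : Fin (k+1), Nat.Coprime (pp (n + i)) Q := by
    intro i
    rw [(pp_prime _).coprime_iff_not_dvd]
    intro hd
    have h1 := Nat.le_of_dvd hQ hd
    have h2 : n + i ≤ pp (n + i) := pp_mono.le_apply
    omega
  refine ⟨fun i => ZMod.unitOfCoprime _ (hcop i), ?_, fun i => by simp⟩
  by_contra hcon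
  have := hn0 (show n ∈ _ from ⟨_, hcon, fun i => by simp⟩)
  omega

noncomputable def GG (N σ τ φ Q D : ℝ) (k : ℕ) (y : ℝ) : ℝ :=
  N / σ * (1 / Real.log y + 1 / (σ * Q)) ^ k *
    ((1 / Q + ((1 / y) ^ (k+1)) ^ 3) * ((1 + τ) * (Q / φ) ^ (k+1)) *
      (1 + (k+1) ^ 2 * (τ + 2 * (D / √(Real.log y)))) + 2 * (Real.log y / √y) ^ (k+1))

lemma GG_lim (N σ τ φ Q D : ℝ) (k : ℕ) (hσ : 0 < σ) (hφ : 0 < φ) (hQ : 0 < Q) :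
    Tendsto (GG N σ τ φ Q D k) atTop
      (nhds (N * ((1 + τ) * (1 + (k+1) ^ 2 * τ)) / (σ * φ) ^ (k+1))) := by
  have hL := Real.tendsto_log_atTop
  have h1 : Tendsto (fun y : ℝ => 1 / Real.log y) atTop (nhds 0) :=
    Tendsto.const_div_atTop hL 1
  have h2 : Tendsto (fun y : ℝ => 1 / y) atTop (nhds 0) := by
    simpa using tendsto_inv_atTop_zero (𝕜 := ℝ)
  have h3 : Tendsto (fun y : ℝ => D / √(Real.log y)) atTop (nhds 0) :=
    Tendsto.const_div_atTop (Real.tendsto_sqrt_atTop.comp hL) D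
  have h4 : Tendsto (fun y : ℝ => Real.log y / √y) atTop (nhds 0) := by
    have := (isLittleO_log_rpow_atTop (show (0:ℝ) < 1/2 by norm_num)).tendsto_div_nhds_zero
    simpa [Real.sqrt_eq_rpow] using this
  have h5 := (((h1.add_const (1 / (σ * Q))).pow k).const_mul (N / σ)).mul
    ((((((h2.pow (k+1)).pow 3).const_add (1 / Q)).mul_const ((1 + τ) * (Q / φ) ^ (k+1))).mul
      ((((h3.const_mul 2).const_add τ).const_mul ((k+1:ℝ) ^ 2)).const_add 1)).add
      ((h4.pow (k+1)).const_mul 2))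
  have h6 := h5
  simp only [zero_add, mul_zero, add_zero, ne_eq, Nat.add_eq_zero_iff, one_ne_zero, and_false,
    not_false_eq_true, zero_pow, OfNat.ofNat_ne_zero] at h6
  have e : N * ((1 + τ) * (1 + (k+1) ^ 2 * τ)) / (σ * φ) ^ (k+1) =
      N / σ * (1 / (σ * Q)) ^ k * (1 / Q * ((1 + τ) * (Q / φ) ^ (k + 1)) * (1 + (k + 1) ^ 2 * τ)) := by
    rw [div_pow, div_pow, mul_pow, mul_pow, one_pow, pow_succ, pow_succ Q, pow_succ φ]
    field_simp
    ring
  rw [e]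
  exact h6

theorem main_Q (k Q w : ℕ) (τ : ℝ) (hQ : 0 < Q) (hw : ∀ p, p.Prime → p ≤ w → p ∣ Q)
    (hw2 : 4 * ((k+1) * (k+1) ^ 2) ^ 2 ≤ w) (hw4 : (2 * (k+1)) ^ 4 ≤ w)
    (hτ : ∀ R : ℕ, ∑ v ∈ Ioc w R, 1 / ((v:ℝ) * √v) ≤ τ)
    (hτ2 : (k+1:ℝ) ^ 2 * τ ≤ 1 / 8) (𝒜 : Finset (Fin (k+1) → (ZMod Q)ˣ))
    (h𝒜 : ∀ A, A ∈ 𝒜 ↔ {n : ℕ | ∀ i : Fin (k+1), ((pp (n + i) : ℕ) : ZMod Q) = A i}.Infinite) :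
    (2 / (9 * (k+1)) * (Q.totient : ℝ)) ^ (k+1) * Real.exp (-k) / 2 ≤ 𝒜.card := by
  obtain ⟨n1, hn1⟩ := ev_type k Q hQ 𝒜 h𝒜
  have hτ0 : 0 ≤ τ := by simpa using hτ 0
  have hφ : (0:ℝ) < Q.totient := by exact_mod_cast Nat.totient_pos.2 hQ
  have hQ' : (0:ℝ) < Q := by exact_mod_cast hQ
  set σ : ℝ := 2 / (9 * (k+1)) with hσ
  have hσ0 : 0 < σ := by positivity
  set B : ℝ := (k + 10) / σ with hB
  have hB0 : 0 < B := by positivity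
  set c0 := Real.exp (-k) * (1 - Real.exp (-10)) with hc0
  set D := √(B + 1) * σ * Q with hD
  have hev : ∀ᶠ Y : ℕ in atTop, c0 ≤ GG 𝒜.card σ τ Q.totient Q D k Y := by
    filter_upwards [eventually_ge_atTop 400, eventually_ge_atTop k, eventually_ge_atTop (pp n1)]
      with Y hY1 hY2 hY3
    have hYR : Y ≤ Y ^ (k+1) := Nat.le_self_pow (Nat.succ_ne_zero k) Y
    set R := Y ^ (k+1) with hR
    have hY0 : (400:ℝ) ≤ Y := by exact_mod_cast hY1
    set L := Real.log Y with hL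
    have hL1 : 1 ≤ L := by
      rw [hL, Real.le_log_iff_exp_le (by linarith)]
      linarith [Real.exp_one_lt_d9]
    have hL0 : 0 < L := by linarith
    set H := ⌈B * L⌉₊ with hH
    have hH1 : B * L ≤ H := Nat.le_ceil _
    have hH2 : (H:ℝ) ≤ (B + 1) * L := by
      have := (Nat.ceil_lt_add_one (show 0 ≤ B * L by positivity)).le
      nlinarith
    have hlogx : Real.log ((R ^ 3 : ℕ) : ℝ) = 3 * (k+1) * L := by
      rw [hR]; push_cast; rw [Real.log_pow, Real.log_pow]; push_cast; ring
    have hfi := fin_ineq k Q w H Y (R ^ 3) (Nat.count Nat.Prime (R + 1))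
      (Nat.count Nat.Prime (R ^ 3 + 1) - k) (σ / L) τ (by positivity) hQ hw hw2 hw4 hτ (by omega)
      (by
        intro n hn
        by_contra hcon
        have : n < Nat.count Nat.Prime (R + 1) :=
          (Nat.lt_nth_iff_count_lt Nat.infinite_setOfPred_prime).2 (by
            change pp n < R + 1; omega)
        omega)
      (by
        intro n hn
        have : pp (n + k) < R ^ 3 + 1 := Nat.nth_lt_of_lt_count (by omega)
        omega)
      𝒜 (by
        intro n hn
        refine hn1 n ?_
        by_contra hcon
        have : n < Nat.count Nat.Prime (R + 1) :=
          (Nat.lt_nth_iff_count_lt Nat.infinite_setOfPred_prime).2 (by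
            have := pp_mono (not_le.1 hcon)
            change pp n < R + 1; omega)
        omega)
      (by
        refine le_trans (le_of_eq ?_) (cheb k R (by omega) (by omega))
        rw [hlogx, hσ]
        field_simp
        ring)
      (by
        calc (k:ℝ) + 10 = σ / L * (B * L) := by rw [hB]; field_simp
          _ ≤ _ := mul_le_mul_of_nonneg_left hH1 (by positivity))
    set x : ℝ := ((R ^ 3 : ℕ) : ℝ) with hx
    have hR0 : (0:ℝ) < R := by exact_mod_cast (by omega : 0 < R)
    have hx0 : 0 < x := by rw [hx]; push_cast; positivity
    have hx1 : ((1 / (Y:ℝ)) ^ (k+1)) ^ 3 = 1 / x := by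
      rw [hx, hR]; push_cast; rw [div_pow, div_pow]; simp
    have hsq : √(H:ℝ) * (σ / L) * Q ≤ D / √L := by
      have h1 : √(H:ℝ) ≤ √(B+1) * √L := by
        rw [← Real.sqrt_mul (by positivity)]; exact Real.sqrt_le_sqrt hH2
      have h2 : √L * √L = L := Real.mul_self_sqrt hL0.le
      have h3 : 0 < √L := Real.sqrt_pos.2 hL0
      calc _ ≤ √(B+1) * √L * (σ / L) * Q := by gcongr
        _ = D / √L := by
          rw [hD, eq_div_iff h3.ne']
          calc _ = √(B+1) * (√L * √L) / L * σ * Q := by ring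
            _ = _ := by rw [h2]; field_simp
    have hE : 2 * ((R:ℝ) ^ 2 * √(R:ℝ)) * L ^ (k+1) / x = 2 * (L / √(Y:ℝ)) ^ (k+1) := by
      have h1 : √(R:ℝ) = √(Y:ℝ) ^ (k+1) := by
        rw [hR]; push_cast
        rw [Real.sqrt_eq_iff_mul_self_eq (by positivity) (by positivity), ← mul_pow,
          Real.mul_self_sqrt (by linarith)]
      have h2 : √(R:ℝ) * √(R:ℝ) = R := Real.mul_self_sqrt hR0.le
      have h3 : 0 < √(R:ℝ) := Real.sqrt_pos.2 hR0
      rw [div_pow, ← h1, hx]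
      push_cast
      rw [mul_div_assoc', div_eq_div_iff (by positivity) h3.ne']
      calc _ = 2 * (R:ℝ) ^ 2 * L ^ (k+1) * (√(R:ℝ) * √(R:ℝ)) := by ring
        _ = _ := by rw [h2]; ring
    have hU : 1 + 1 / (σ / L * Q) = L * (1 / L + 1 / (σ * Q)) := by field_simp
    rw [hU, mul_pow] at hfi
    set V := 1 / L + 1 / (σ * Q) with hV
    have hV0 : 0 < V := by positivity
    have hfi2 : σ / L * x * c0 ≤ 𝒜.card * (L ^ k * V ^ k *
        ((x / Q + 1) * (1 + τ) * ((Q:ℝ) / Q.totient) ^ (k+1) / L ^ (k+1) *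
          (1 + (k+1) ^ 2 * (τ + 2 * (D / √L))) + 2 * ((R:ℝ) ^ 2 * √(R:ℝ)))) := by
      refine hfi.trans ?_
      have : 2 * √(H:ℝ) * (σ / L) * Q ≤ 2 * (D / √L) := by linarith
      gcongr
    have hfi3 : c0 ≤ L / (σ * x) * (𝒜.card * (L ^ k * V ^ k *
        ((x / Q + 1) * (1 + τ) * ((Q:ℝ) / Q.totient) ^ (k+1) / L ^ (k+1) *
          (1 + (k+1) ^ 2 * (τ + 2 * (D / √L))) + 2 * ((R:ℝ) ^ 2 * √(R:ℝ))))) := by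
      calc c0 = L / (σ * x) * (σ / L * x * c0) := by field_simp
        _ ≤ _ := mul_le_mul_of_nonneg_left hfi2 (by positivity)
    refine hfi3.trans (le_of_eq ?_)
    unfold GG
    rw [hx1, ← hL, ← hV, ← hE]
    generalize 1 + (k+1:ℝ) ^ 2 * (τ + 2 * (D / √L)) = T1
    generalize ((Q:ℝ) / Q.totient) ^ (k+1) = T2
    generalize 2 * ((R:ℝ) ^ 2 * √(R:ℝ)) = T3
    rw [pow_succ L k]
    field_simp
  have hlim := (GG_lim 𝒜.card σ τ Q.totient Q D k hσ0 hφ hQ').comp tendsto_natCast_atTop_atTop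
  have hfinal := ge_of_tendsto hlim hev
  have h10 : Real.exp (-10) ≤ 1 / 11 := by
    rw [Real.exp_neg, inv_eq_one_div]
    apply one_div_le_one_div_of_le (by norm_num)
    linarith [Real.add_one_le_exp (10:ℝ)]
  rw [le_div_iff₀ (by positivity)] at hfinal
  have hτ1 : τ ≤ 1 / 8 := by
    have : (1:ℝ) ≤ (k+1:ℝ) ^ 2 := by
      have : (0:ℝ) ≤ k := by positivity
      nlinarith
    nlinarith
  have h11 : (1 + τ) * (1 + (k+1:ℝ) ^ 2 * τ) ≤ 9 / 8 * (9 / 8) := by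
    apply mul_le_mul (by linarith) (by linarith) (by positivity) (by norm_num)
  have h12 : (𝒜.card:ℝ) * ((1 + τ) * (1 + (k+1:ℝ) ^ 2 * τ)) ≤ 𝒜.card * (9 / 8 * (9 / 8)) :=
    mul_le_mul_of_nonneg_left h11 (by positivity)
  have h13 : Real.exp (-k) * (10 / 11) ≤ c0 :=
    mul_le_mul_of_nonneg_left (by linarith) (Real.exp_pos _).le
  have h14 : Real.exp (-k) * (10 / 11) * (σ * Q.totient) ^ (k+1) ≤ c0 * (σ * Q.totient) ^ (k+1) :=
    mul_le_mul_of_nonneg_right h13 (by positivity)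
  have h15 : 0 ≤ Real.exp (-k) * (σ * Q.totient) ^ (k+1) := by positivity
  nlinarith

end SV


namespace SV
open Finset

lemma exists_w (τ : ℝ) (hτ : 0 < τ) (W : ℕ) : ∃ w, W ≤ w ∧
    ∀ R : ℕ, ∑ v ∈ Ioc w R, 1 / ((v:ℝ) * √v) ≤ τ := by
  set f : ℕ → ℝ := fun v => 1 / ((v:ℝ) * √v) with hf
  have hf0 : ∀ v, 0 ≤ f v := fun v => by simp only [hf]; positivity
  have hsum : Summable f := by
    have h := Real.summable_one_div_nat_rpow.2 (show (1:ℝ) < 3 / 2 by norm_num)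
    refine h.congr fun v => ?_
    rcases Nat.eq_zero_or_pos v with rfl | hv
    · simp [hf]
    · have hv' : (0:ℝ) < v := by exact_mod_cast hv
      simp only [hf]
      rw [show (3:ℝ)/2 = 1 + 1/2 by norm_num, Real.rpow_add hv', Real.rpow_one, ← Real.sqrt_eq_rpow]
  have ht := hsum.hasSum.tendsto_sum_nat
  have hev := ht.eventually_const_lt (show (∑' v, f v) - τ < ∑' v, f v by linarith)
  obtain ⟨n, hn⟩ := (hev.and (eventually_ge_atTop (W + 1))).exists
  refine ⟨n - 1, by omega, fun R => ?_⟩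
  have h1 : ∑ v ∈ range n, f v + ∑ v ∈ Ioc (n-1) R, f v ≤ ∑' v, f v := by
    rw [← sum_union]
    · exact hsum.sum_le_tsum _ fun _ _ => hf0 _
    · rw [Finset.disjoint_left]
      intro v
      simp only [mem_range, mem_Ioc]
      omega
  linarith [hn.1]

lemma fiber_card {q Q : ℕ} (hQ : 0 < Q) (h : q ∣ Q) : ∃ c : ℕ, 0 < c ∧ q.totient * c = Q.totient ∧
    ∀ y : (ZMod q)ˣ, Nat.card {u : (ZMod Q)ˣ // ZMod.unitsMap h u = y} = c := by
  classical
  have : NeZero Q := ⟨hQ.ne'⟩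
  have : NeZero q := ⟨(Nat.pos_of_dvd_of_pos h hQ).ne'⟩
  have hsurj := ZMod.unitsMap_surjective h
  refine ⟨(univ.filter (fun u : (ZMod Q)ˣ => ZMod.unitsMap h u = 1)).card, ?_, ?_, ?_⟩
  · rw [card_pos]; exact ⟨1, by simp⟩
  · have h1 := card_eq_sum_card_fiberwise (f := ZMod.unitsMap h)
      (s := (univ : Finset (ZMod Q)ˣ)) (t := univ) (fun _ _ => by simp)
    rw [card_univ, ZMod.card_units_eq_totient] at h1
    rw [h1, sum_congr rfl (fun y _ => MonoidHom.card_fiber_eq_of_mem_range (ZMod.unitsMap h)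
      (hsurj y) (hsurj 1))]
    simp [ZMod.card_units_eq_totient]
  · intro y
    rw [Nat.card_eq_fintype_card, Fintype.card_subtype]
    exact MonoidHom.card_fiber_eq_of_mem_range (ZMod.unitsMap h) (hsurj y) (hsurj 1)

theorem main_q (k q : ℕ) (hq : 0 < q) (𝒜 : Finset (Fin (k+1) → (ZMod q)ˣ))
    (h𝒜 : ∀ A, A ∈ 𝒜 ↔ {n : ℕ | ∀ i : Fin (k+1), ((pp (n + i) : ℕ) : ZMod q) = A i}.Infinite) :
    (2 / (9 * (k+1)) * (q.totient : ℝ)) ^ (k+1) * Real.exp (-k) / 2 ≤ 𝒜.card := by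
  classical
  obtain ⟨w, hwW, hτ⟩ := exists_w (1 / (8 * (k+1:ℝ) ^ 2)) (by positivity)
    (max (4 * ((k+1) * (k+1) ^ 2) ^ 2) ((2 * (k+1)) ^ 4))
  set Q := q * primorial w with hQdef
  have hQ : 0 < Q := Nat.mul_pos hq (primorial_pos w)
  have hd : q ∣ Q := Dvd.intro _ rfl
  have : NeZero Q := ⟨hQ.ne'⟩
  have : NeZero q := ⟨hq.ne'⟩
  have hw : ∀ p, p.Prime → p ≤ w → p ∣ Q := by
    intro p hp hpw
    refine Dvd.dvd.mul_left ?_ q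
    unfold primorial
    exact dvd_prod_of_mem _ (by simp [hp]; omega)
  set 𝒬 : Finset (Fin (k+1) → (ZMod Q)ˣ) := univ.filter
    (fun A => {n : ℕ | ∀ i : Fin (k+1), ((pp (n + i) : ℕ) : ZMod Q) = A i}.Infinite) with h𝒬
  have hmain := main_Q k Q w _ hQ hw ((le_max_left _ _).trans hwW) ((le_max_right _ _).trans hwW)
    hτ (by
      have : (k+1:ℝ) ≠ 0 := by positivity
      field_simp; norm_num) 𝒬 (by intro A; simp [h𝒬])
  obtain ⟨c, hc0, hc, hfib⟩ := fiber_card hQ hd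
  have hcard : 𝒬.card ≤ c ^ (k+1) * 𝒜.card := by
    refine card_le_mul_card_image_of_maps_to (f := fun A i => ZMod.unitsMap hd (A i)) ?_ _ ?_
    · intro A hA
      have hA : A ∈ 𝒬 := hA
      rw [h𝒬, mem_filter] at hA
      change _ ∈ 𝒜
      rw [h𝒜]
      refine hA.2.mono ?_
      intro n hn i
      have h1 := congrArg (ZMod.castHom hd (ZMod q)) (hn i)
      rw [map_natCast] at h1
      rw [h1]
      rfl
    · intro b _
      calc _ ≤ (Fintype.piFinset (fun i => univ.filter
            (fun u : (ZMod Q)ˣ => ZMod.unitsMap hd u = b i))).card := by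
            refine card_le_card fun A hA => ?_
            rw [Fintype.mem_piFinset]
            intro i
            have := (mem_filter.1 hA).2
            simp only [mem_filter, mem_univ, true_and]
            exact congrFun this i
        _ = ∏ i : Fin (k+1), c := by
            rw [Fintype.card_piFinset]
            refine prod_congr rfl fun i _ => ?_
            rw [← hfib (b i), Nat.card_eq_fintype_card, Fintype.card_subtype]
        _ ≤ _ := by simp
  have hcard' : (𝒬.card : ℝ) ≤ c ^ (k+1) * 𝒜.card := by exact_mod_cast hcard
  have h1 := hmain.trans hcard'
  rw [← hc] at h1
  have hc' : (0:ℝ) < (c:ℝ) ^ (k+1) := by have : (0:ℝ) < c := by exact_mod_cast hc0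
                                         positivity
  refine le_of_mul_le_mul_left ?_ hc'
  refine le_trans (le_of_eq ?_) h1
  push_cast
  rw [← mul_assoc, mul_pow _ (c:ℝ)]
  ring

lemma tendsto_of_inf (q m : ℕ) (a : Fin m → (ZMod q)ˣ)
    (h : {n : ℕ | ∀ i : Fin m, ((pp (n + i) : ℕ) : ZMod q) = a i}.Infinite) :
    Tendsto (consecCount q m a) atTop atTop := by
  rw [tendsto_atTop]
  intro b
  obtain ⟨T, hT, hTb⟩ := h.exists_subset_card_eq b
  obtain ⟨N, hN⟩ := T.bddAbove
  filter_upwards [eventually_ge_atTop ((pp N : ℕ) : ℝ)] with x hx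
  unfold consecCount
  rw [← hTb, ← Set.ncard_coe_finset]
  refine Set.ncard_le_ncard ?_ ?_
  · intro n hn
    refine ⟨?_, hT hn⟩
    refine le_trans ?_ hx
    exact_mod_cast pp_mono.monotone (hN hn)
  · refine (Set.finite_Iic (⌊x⌋₊)).subset ?_
    intro n hn
    have h1 : n ≤ pp n := pp_mono.le_apply
    exact h1.trans (Nat.le_floor hn.1)

theorem main_ncard (k q : ℕ) (hq : 0 < q) :
    (2 / (9 * (k+1)) * (q.totient : ℝ)) ^ (k+1) * Real.exp (-k) / 2 ≤
    ({a : Fin (k+1) → (ZMod q)ˣ | Tendsto (consecCount q (k+1) a) atTop atTop}.ncard : ℝ) := by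
  classical
  have : NeZero q := ⟨hq.ne'⟩
  refine (main_q k q hq (univ.filter
    (fun A => {n : ℕ | ∀ i : Fin (k+1), ((pp (n + i) : ℕ) : ZMod q) = A i}.Infinite))
    (by intro A; simp)).trans ?_
  rw [← Set.ncard_coe_finset]
  have h : ∀ s t : Set (Fin (k+1) → (ZMod q)ˣ), s ⊆ t → (s.ncard : ℝ) ≤ t.ncard := fun s t hst => by
    exact_mod_cast Set.ncard_le_ncard hst (Set.toFinite t)
  refine h _ _ fun A hA => tendsto_of_inf q (k+1) A ?_
  simpa using hA

end SV


namespace SV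
open Finset

lemma fact_le (n : ℕ) : (n+1).factorial ≤ (n+1) ^ n := by
  induction n with
  | zero => simp
  | succ n ih =>
    rw [Nat.factorial_succ, pow_succ, mul_comm]
    exact Nat.mul_le_mul_right _ (ih.trans (Nat.pow_le_pow_left (by omega) n))

lemma fact_le_half (m : ℕ) : (m.factorial : ℝ) ≤ (((m:ℝ) + 1) / 2) ^ m := by
  induction m with
  | zero => simp
  | succ m ih =>
    rw [Nat.factorial_succ]
    push_cast
    have h0 : (0:ℝ) < m + 1 := by positivity
    have hb := one_add_mul_le_pow (a := 1 / ((m:ℝ) + 1)) (by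
      have : 0 < 1 / ((m:ℝ) + 1) := by positivity
      linarith) (m+1)
    have h2 : (2:ℝ) ≤ (1 + 1 / ((m:ℝ) + 1)) ^ (m+1) := by
      refine le_trans (le_of_eq ?_) hb
      push_cast; field_simp; norm_num
    have e : ((m:ℝ) + 1 + 1) / 2 = ((m:ℝ) + 1) / 2 * (1 + 1 / ((m:ℝ) + 1)) := by field_simp
    rw [e, mul_pow]
    calc ((m:ℝ) + 1) * m.factorial ≤ (m + 1) * (((m:ℝ) + 1) / 2) ^ m :=
          mul_le_mul_of_nonneg_left ih h0.le
      _ = (((m:ℝ) + 1) / 2) ^ (m+1) * 2 := by rw [pow_succ]; ring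
      _ ≤ _ := mul_le_mul_of_nonneg_left h2 (by positivity)

lemma A_bound (t : ℕ) (ht : 2 ≤ t) :
    (16:ℝ) ^ t ≤ (2 : ℝ) ^ (3 * (t+1) - 2) * (t : ℝ) ^ (2 * (t+1) - 1) / ((t+1).factorial : ℝ) := by
  rw [le_div_iff₀ (by positivity)]
  have h1 : (t+1).factorial ≤ 2 * t ^ t := by
    obtain ⟨n, rfl⟩ : ∃ n, t = n + 1 := ⟨t - 1, by omega⟩
    rw [Nat.factorial_succ]
    calc (n + 1 + 1) * (n+1).factorial ≤ (2 * (n+1)) * (n+1) ^ n :=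
          Nat.mul_le_mul (by omega) (fact_le n)
      _ = _ := by rw [pow_succ]; ring
  have h1' : ((t+1).factorial : ℝ) ≤ 2 * (t:ℝ) ^ t := by exact_mod_cast h1
  have ht' : (2:ℝ) ≤ t := by exact_mod_cast ht
  rw [show 3 * (t+1) - 2 = 3 * t + 1 by omega, show 2 * (t+1) - 1 = t + t + 1 by omega]
  calc (16:ℝ) ^ t * (t+1).factorial ≤ 16 ^ t * (2 * (t:ℝ) ^ t) := by gcongr
    _ = 8 ^ t * 2 ^ t * (2 * (t:ℝ) ^ t) := by rw [← mul_pow]; norm_num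
    _ ≤ 8 ^ t * (t:ℝ) ^ t * (2 * (t:ℝ) ^ t) := by gcongr
    _ ≤ 8 ^ t * (t:ℝ) ^ t * (2 * (t:ℝ) ^ t) * t := le_mul_of_one_le_right (by positivity) (by linarith)
    _ = _ := by rw [pow_succ, pow_succ, pow_add, pow_mul]; norm_num; ring

/-- the key numerical input -/
lemma Mval_bound (m r n : ℕ) (hm : 0 < m) (hr : 2 ≤ r) (hn : n = ⌈(m : ℝ) / ((r : ℝ) - 1)⌉₊) :
    16 * (m:ℝ) ≤ Mval m r ∧ (n.factorial : ℝ) ≤ (76 / 1000 * (Mval m r / m)) ^ m := by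
  obtain ⟨t, rfl⟩ : ∃ t, r = t + 1 := ⟨r - 1, by omega⟩
  have ht1 : 1 ≤ t := by omega
  have ht' : (1:ℝ) ≤ t := by exact_mod_cast ht1
  have hm' : (1:ℝ) ≤ m := by exact_mod_cast hm
  have e : (((t+1 : ℕ) : ℝ) - 1) = t := by push_cast; ring
  unfold Mval
  rw [e] at hn ⊢
  set A := ((2 : ℝ) ^ (3 * (t+1) - 2) * (t : ℝ) ^ (2 * (t+1) - 1) / ((t+1).factorial : ℝ)) ^ ((1 : ℝ) / t) with hA
  set base : ℝ := (m:ℝ) * t + (t+1 : ℕ) with hbase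
  have hbase1 : 1 ≤ base := by
    rw [hbase]; push_cast; nlinarith
  set K := A * base ^ ((1:ℝ) / t) with hK
  have hA0 : 0 ≤ A := by rw [hA]; positivity
  have hK0 : 0 ≤ K := by rw [hK]; positivity
  have hceil : K * m ≤ (⌈A * m * base ^ ((1:ℝ) / t)⌉₊ : ℝ) := by
    refine le_trans (le_of_eq ?_) (Nat.le_ceil _)
    rw [hK]; ring
  suffices h : 16 ≤ K ∧ (n.factorial : ℝ) ≤ (76 / 1000 * K) ^ m by
    refine ⟨le_trans ?_ hceil, h.2.trans ?_⟩
    · exact mul_le_mul_of_nonneg_right h.1 (by positivity)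
    · have : K ≤ (⌈A * m * base ^ ((1:ℝ) / t)⌉₊ : ℝ) / m := by
        rw [le_div_iff₀ (by linarith)]; exact hceil
      gcongr
  rcases Nat.lt_or_ge t 2 with ht | ht
  · have : t = 1 := by omega
    subst this
    have hA8 : A = 8 := by rw [hA]; norm_num [Nat.factorial]
    have hKe : K = 8 * (m + 2) := by
      rw [hK, hA8, hbase]; push_cast; simp
    have hnm : n = m := by rw [hn]; simp
    rw [hKe, hnm]
    refine ⟨by linarith, (fact_le_half m).trans ?_⟩
    gcongr
    linarith
  · have hA16 : 16 ≤ A := by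
      rw [hA]
      have h1 := A_bound t ht
      have h2 : ((16:ℝ) ^ t) ^ ((1:ℝ) / t) = 16 := by
        rw [← Real.rpow_natCast, ← Real.rpow_mul (by norm_num), mul_one_div_cancel (by positivity),
          Real.rpow_one]
      calc (16:ℝ) = ((16:ℝ) ^ t) ^ ((1:ℝ) / t) := h2.symm
        _ ≤ _ := Real.rpow_le_rpow (by positivity) h1 (by positivity)
    have hb1 : 1 ≤ base ^ ((1:ℝ) / t) := Real.one_le_rpow hbase1 (by positivity)
    refine ⟨?_, ?_⟩
    · rw [hK]; nlinarith
    · have hn0 : 0 < n := by rw [hn, Nat.ceil_pos]; positivity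
      have hn1 : (n:ℝ) - 1 ≤ m / t := by
        have := Nat.ceil_lt_add_one (show (0:ℝ) ≤ (m:ℝ) / t by positivity)
        rw [← hn] at this; linarith
      have hmt : (m:ℝ) / t ≤ m := div_le_self (by linarith) ht'
      have hnb : (n:ℝ) ≤ base := by
        rw [hbase]; push_cast; nlinarith
      obtain ⟨l, rfl⟩ : ∃ l, n = l + 1 := ⟨n - 1, by omega⟩
      have hl : (l:ℝ) ≤ m / t := by push_cast at hn1; linarith
      calc ((l+1).factorial : ℝ) ≤ ((l+1 : ℕ):ℝ) ^ l := by exact_mod_cast fact_le l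
        _ ≤ base ^ l := by gcongr
        _ = base ^ (l:ℝ) := (Real.rpow_natCast _ _).symm
        _ ≤ base ^ ((m:ℝ) / t) := Real.rpow_le_rpow_of_exponent_le hbase1 hl
        _ = (base ^ ((1:ℝ) / t)) ^ m := by
            rw [← Real.rpow_natCast, ← Real.rpow_mul (by linarith)]; congr 1; ring
        _ ≤ _ := by
            refine pow_le_pow_left₀ (by positivity) ?_ m
            rw [hK]; nlinarith

end SV

theorem stmt4 (m r : ℕ) (hm : 0 < m) (hr : 2 ≤ r) (q : ℕ) (hq : 0 < q) (hsq : Squarefree q)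
    (hφ : Mval m r ≤ q.totient) :
    (⌈(m : ℝ) / ((r : ℝ) - 1)⌉₊.factorial : ℝ) /
          ((Mval m r).descFactorial ⌈(m : ℝ) / ((r : ℝ) - 1)⌉₊ : ℝ) *
        (q.totient.descFactorial ⌈(m : ℝ) / ((r : ℝ) - 1)⌉₊ : ℝ) ≤
      ({a : Fin m → (ZMod q)ˣ | Tendsto (consecCount q m a) atTop atTop}.ncard : ℝ) := by
  obtain ⟨n, hn⟩ : ∃ n, n = ⌈(m : ℝ) / ((r : ℝ) - 1)⌉₊ := ⟨_, rfl⟩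
  obtain ⟨h16, hfact⟩ := SV.Mval_bound m r n hm hr hn
  rw [← hn]
  have hm' : (1:ℝ) ≤ m := by exact_mod_cast hm
  have hr' : (2:ℝ) ≤ r := by exact_mod_cast hr
  have hnm : n ≤ m := by
    rw [hn, Nat.ceil_le]
    exact div_le_self (by linarith) (by linarith)
  have hnm' : (n:ℝ) ≤ m := by exact_mod_cast hnm
  have hmain : (2 / (9 * (m:ℝ)) * (q.totient : ℝ)) ^ m * Real.exp (-((m:ℝ) - 1)) / 2 ≤
      ({a : Fin m → (ZMod q)ˣ | Tendsto (consecCount q m a) atTop atTop}.ncard : ℝ) := by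
    obtain ⟨k, rfl⟩ : ∃ k, m = k + 1 := ⟨m - 1, by omega⟩
    have := SV.main_ncard k q hq
    push_cast
    rw [add_sub_cancel_right]
    exact this
  refine le_trans ?_ hmain
  set M : ℕ := Mval m r
  set φ : ℕ := q.totient
  have hφ' : (M:ℝ) ≤ φ := by exact_mod_cast hφ
  have hM0 : (0:ℝ) < M := by linarith
  have hφ0 : (0:ℝ) < φ := by linarith
  have hdf : (15 / 16 * (M:ℝ)) ^ n ≤ (M.descFactorial n : ℝ) := by
    have h1 : ((M + 1 - n : ℕ) : ℝ) ^ n ≤ (M.descFactorial n : ℝ) := by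
      exact_mod_cast Nat.pow_sub_le_descFactorial M n
    refine le_trans (pow_le_pow_left₀ (by positivity) ?_ n) h1
    have : n ≤ M + 1 := by
      have : (n:ℝ) ≤ ((M + 1 : ℕ) : ℝ) := by push_cast; linarith
      exact_mod_cast this
    rw [Nat.cast_sub this]; push_cast; linarith
  have hdφ : (φ.descFactorial n : ℝ) ≤ (φ:ℝ) ^ n := by exact_mod_cast Nat.descFactorial_le_pow φ n
  have hE : Real.exp (-((m:ℝ) - 1)) = Real.exp 1 * (Real.exp 1)⁻¹ ^ m := by
    rw [← Real.exp_neg, ← Real.exp_nat_mul, ← Real.exp_add]; congr 1; ring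
  have he1 := Real.exp_one_lt_d9
  have he2 := Real.exp_one_gt_d9
  have hone : 1 ≤ φ / (15 / 16 * (M:ℝ)) := by
    rw [one_le_div (by positivity)]; linarith
  calc (n.factorial : ℝ) / (M.descFactorial n) * φ.descFactorial n
      ≤ n.factorial / (15 / 16 * (M:ℝ)) ^ n * (φ:ℝ) ^ n := by gcongr
    _ = n.factorial * (φ / (15 / 16 * (M:ℝ))) ^ n := by rw [div_pow]; ring
    _ ≤ n.factorial * (φ / (15 / 16 * (M:ℝ))) ^ m := by
        gcongr
    _ ≤ (76 / 1000 * (M / m)) ^ m * (φ / (15 / 16 * (M:ℝ))) ^ m := by gcongr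
    _ = (76 / 1000 * 16 / 15 * (φ / m)) ^ m := by
        rw [← mul_pow]; congr 1; field_simp
    _ ≤ (2 / 9 * (Real.exp 1)⁻¹ * (φ / m)) ^ m := by
        refine pow_le_pow_left₀ (by positivity) ?_ m
        refine mul_le_mul_of_nonneg_right ?_ (by positivity)
        rw [← div_eq_mul_inv, le_div_iff₀ (by positivity)]
        linarith
    _ = (2 / (9 * (m:ℝ)) * φ) ^ m * (Real.exp 1)⁻¹ ^ m := by
        rw [← mul_pow]; congr 1; field_simp
    _ ≤ (2 / (9 * (m:ℝ)) * φ) ^ m * (Real.exp 1)⁻¹ ^ m * (Real.exp 1 / 2) :=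
        le_mul_of_one_le_right (by positivity) (by linarith)
    _ = _ := by rw [hE]; ring
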